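/- arXiv:1005.2730 — 7 statements merged into one kernel-verified Lean document; each statement's English description precedes it below -/
import Mathlib

section
/- For every real t with 0 ≤ t ≤ π/2, ∫_0^t x² cot x dx = (1/4) ∑_{n=1}^∞ (2 sin t)^{2n} / (n³ C(2n,n)). -/
open Real

/-!
The identity is the termwise integral, against `cot x`, of the expansion
`2 x² = ∑_{n ≥ 1} (2 sin x)^{2n} / (n² C(2n,n))`, since
`∫_0^t (2 sin x)^{2n} cot x dx = (2 sin t)^{2n} / (2n)`.

Both the expansion and the interchange come from the remainder `R_N` of the expansion after `N`
terms. Because `(n+1) C(2n+2,n+1) = 2 (2n+1) C(2n,n)`, the second derivatives of the terms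
telescope, leaving `R_N'' = 4 (2 sin x)^{2N} / C(2N,N)` with `R_N(0) = R_N'(0) = 0`
(`hasDerivAt_sqRemDeriv`). Hence `0 ≤ R_N ≤ 2 x²` on `[0, π/2]`, and, as `4^N / C(2N,N) ≤ 2N` and
`sin x < 1`, `R_N(x) → 0` for `0 < x < π/2`. Since `2 x² cot x ≤ 2 x`, dominated convergence gives
`∫_0^t R_N(x) cot x dx → 0`, which is the claim.
-/

/-- The remainder `R_N` of the expansion of `2 x²` in powers of `2 sin x` after `N` terms; the
summation index is shifted so that it starts at `0`. -/
noncomputable def sqRem (N : ℕ) (x : ℝ) : ℝ :=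
  2 * x ^ 2 - ∑ n ∈ Finset.range N,
    (2 * sin x) ^ (2 * (n + 1)) / (((n : ℝ) + 1) ^ 2 * (Nat.centralBinom (n + 1) : ℝ))

/-- The derivative of `sqRem N`. -/
noncomputable def sqRemDeriv (N : ℕ) (x : ℝ) : ℝ :=
  4 * x - ∑ n ∈ Finset.range N,
    4 * ((2 * sin x) ^ (2 * n + 1) * cos x) / (((n : ℝ) + 1) * (Nat.centralBinom (n + 1) : ℝ))

lemma centralBinom_cast_pos (n : ℕ) : (0 : ℝ) < Nat.centralBinom n := by
  exact_mod_cast Nat.centralBinom_pos n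

lemma hasDerivAt_two_sin_pow (k : ℕ) (x : ℝ) :
    HasDerivAt (fun y => (2 * sin y) ^ (k + 1)) (((k : ℝ) + 1) * (2 * sin x) ^ k * (2 * cos x)) x := by
  simpa using ((hasDerivAt_sin x).const_mul 2).fun_pow (k + 1)

lemma hasDerivAt_sqRem (N : ℕ) (x : ℝ) : HasDerivAt (sqRem N) (sqRemDeriv N x) x := by
  unfold sqRem sqRemDeriv
  refine HasDerivAt.fun_sub ?_ (HasDerivAt.fun_sum fun n _ => ?_)
  · refine ((hasDerivAt_pow 2 x).const_mul 2).congr_deriv ?_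
    norm_num
    ring
  · refine ((hasDerivAt_two_sin_pow (2 * n + 1) x).div_const
      (((n : ℝ) + 1) ^ 2 * (Nat.centralBinom (n + 1) : ℝ))).congr_deriv ?_
    have := centralBinom_cast_pos (n + 1)
    push_cast
    field_simp
    ring

/-- The second derivatives of the terms of the expansion telescope. -/
lemma hasDerivAt_sqRemDeriv (N : ℕ) (x : ℝ) :
    HasDerivAt (sqRemDeriv N) (4 * (2 * sin x) ^ (2 * N) / (Nat.centralBinom N : ℝ)) x := by
  induction N with
  | zero =>
    have : sqRemDeriv 0 = fun y => 4 * y := by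
      funext y
      simp [sqRemDeriv]
    rw [this]
    simpa using (hasDerivAt_id x).const_mul 4
  | succ n ih =>
    have key : sqRemDeriv (n + 1) = fun y => sqRemDeriv n y -
        4 * ((2 * sin y) ^ (2 * n + 1) * cos y) /
          (((n : ℝ) + 1) * (Nat.centralBinom (n + 1) : ℝ)) := by
      funext y
      simp only [sqRemDeriv, Finset.sum_range_succ]
      ring
    rw [key]
    have h2 := (((hasDerivAt_two_sin_pow (2 * n) x).fun_mul (hasDerivAt_cos x)).const_mul 4).div_const
      (((n : ℝ) + 1) * (Nat.centralBinom (n + 1) : ℝ))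
    refine (ih.fun_sub h2).congr_deriv ?_
    have hc := centralBinom_cast_pos n
    have hrec : ((n : ℝ) + 1) * (Nat.centralBinom (n + 1) : ℝ)
        = 2 * (2 * n + 1) * Nat.centralBinom n := by
      exact_mod_cast Nat.succ_mul_centralBinom_succ n
    have hrec' : (Nat.centralBinom (n + 1) : ℝ)
        = 2 * (2 * n + 1) * Nat.centralBinom n / ((n : ℝ) + 1) := by
      field_simp
      linarith
    have hcos : cos x * cos x = 1 - sin x ^ 2 := by
      have := sin_sq_add_cos_sq x
      linarith
    have hnum : ((↑(2 * n) + 1) * (2 * sin x) ^ (2 * n) * (2 * cos x) * cos x +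
        (2 * sin x) ^ (2 * n + 1) * -sin x : ℝ)
        = (2 * sin x) ^ (2 * n) * (2 * (2 * n + 1) - 4 * (n + 1) * sin x ^ 2) := by
      push_cast
      linear_combination (2 * (2 * (n : ℝ) + 1) * (2 * sin x) ^ (2 * n)) * hcos
    rw [hnum, hrec, hrec']
    have hn : (2 * (n : ℝ) + 1) ≠ 0 := by positivity
    field_simp
    ring

/-- A function vanishing to first order at `0` with nonnegative second derivative on `[0, b]` is
nonnegative at `b`. -/
lemma nonneg_of_second_deriv_nonneg {f f' f'' : ℝ → ℝ} {b : ℝ} (hb : 0 ≤ b)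
    (hf : ∀ x, HasDerivAt f (f' x) x) (hf' : ∀ x, HasDerivAt f' (f'' x) x)
    (h0 : f 0 = 0) (h0' : f' 0 = 0) (h : ∀ x ∈ Set.Icc 0 b, 0 ≤ f'' x) : 0 ≤ f b := by
  have mono : ∀ g g' : ℝ → ℝ, (∀ x, HasDerivAt g (g' x) x) → (∀ x ∈ Set.Icc 0 b, 0 ≤ g' x) →
      g 0 = 0 → ∀ x ∈ Set.Icc 0 b, 0 ≤ g x := by
    intro g g' hg hg' hg0 x hx
    have hm : MonotoneOn g (Set.Icc 0 b) := by
      refine monotoneOn_of_deriv_nonneg (convex_Icc 0 b)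
        (fun y _ => (hg y).continuousAt.continuousWithinAt)
        (fun y _ => (hg y).differentiableAt.differentiableWithinAt) fun y hy => ?_
      rw [(hg y).deriv]
      exact hg' y (interior_subset hy)
    have := hm (Set.left_mem_Icc.2 hb) hx hx.1
    rwa [hg0] at this
  exact mono f f' hf (mono f' f'' hf' h h0') h0 b (Set.right_mem_Icc.2 hb)

lemma sqRem_zero_right (N : ℕ) : sqRem N 0 = 0 := by simp [sqRem]

lemma sqRemDeriv_zero_right (N : ℕ) : sqRemDeriv N 0 = 0 := by simp [sqRemDeriv]

lemma sqRem_nonneg (N : ℕ) {x : ℝ} (hx : 0 ≤ x) : 0 ≤ sqRem N x := by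
  refine nonneg_of_second_deriv_nonneg hx (hasDerivAt_sqRem N) (hasDerivAt_sqRemDeriv N)
    (sqRem_zero_right N) (sqRemDeriv_zero_right N) fun y _ => ?_
  rw [pow_mul]
  positivity

lemma sqRem_le_two_sq (N : ℕ) (x : ℝ) : sqRem N x ≤ 2 * x ^ 2 := by
  unfold sqRem
  have : 0 ≤ ∑ n ∈ Finset.range N,
      (2 * sin x) ^ (2 * (n + 1)) / (((n : ℝ) + 1) ^ 2 * (Nat.centralBinom (n + 1) : ℝ)) := by
    refine Finset.sum_nonneg fun n _ => ?_
    rw [pow_mul]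
    positivity
  linarith

/-- The bound comes from `R_N'' ≤ R_N''(x)` on `[0, x]`, `sin` being increasing there. -/
lemma sqRem_le (N : ℕ) {x : ℝ} (hx : 0 ≤ x) (hx' : x ≤ π / 2) :
    sqRem N x ≤ 4 * (2 * sin x) ^ (2 * N) / (Nat.centralBinom N : ℝ) / 2 * x ^ 2 := by
  set ε := 4 * (2 * sin x) ^ (2 * N) / (Nat.centralBinom N : ℝ) with hε
  rw [← sub_nonneg]
  refine nonneg_of_second_deriv_nonneg (f := fun y => ε / 2 * y ^ 2 - sqRem N y)
    (f' := fun y => ε * y - sqRemDeriv N y)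
    (f'' := fun y => ε - 4 * (2 * sin y) ^ (2 * N) / (Nat.centralBinom N : ℝ)) hx
    (fun y => ?_) (fun y => ?_) ?_ ?_ fun y hy => ?_
  · refine HasDerivAt.fun_sub ?_ (hasDerivAt_sqRem N y)
    refine ((hasDerivAt_pow 2 y).const_mul (ε / 2)).congr_deriv ?_
    norm_num
    ring
  · refine HasDerivAt.fun_sub ?_ (hasDerivAt_sqRemDeriv N y)
    simpa using (hasDerivAt_id y).const_mul ε
  · simp [sqRem_zero_right]
  · simp [sqRemDeriv_zero_right]
  · have h1 : 0 ≤ sin y := sin_nonneg_of_nonneg_of_le_pi hy.1 (by linarith [hy.2, pi_pos])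
    have h2 : sin y ≤ sin x :=
      sin_le_sin_of_le_of_le_pi_div_two (by linarith [hy.1, pi_pos]) hx' hy.2
    rw [sub_nonneg, hε]
    gcongr

/-- The expansion `2 x² = ∑_{n ≥ 1} (2 sin x)^{2n} / (n² C(2n,n))` holds for `0 < x < π/2`. -/
lemma tendsto_sqRem {x : ℝ} (hx : 0 < x) (hx' : x < π / 2) :
    Filter.Tendsto (fun N => sqRem N x) Filter.atTop (nhds 0) := by
  have hs0 : 0 ≤ sin x := sin_nonneg_of_nonneg_of_le_pi hx.le (by linarith [pi_pos])
  have hs1 : sin x < 1 := by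
    rw [← sin_pi_div_two]
    exact sin_lt_sin_of_lt_of_le_pi_div_two (by linarith [pi_pos]) le_rfl hx'
  have hq : sin x ^ 2 < 1 := by nlinarith
  have hlim : Filter.Tendsto (fun N : ℕ => 4 * x ^ 2 * ((N : ℝ) * (sin x ^ 2) ^ N))
      Filter.atTop (nhds 0) := by
    simpa using (tendsto_self_mul_const_pow_of_lt_one (sq_nonneg (sin x)) hq).const_mul (4 * x ^ 2)
  refine tendsto_of_tendsto_of_tendsto_of_le_of_le' tendsto_const_nhds hlim
    (Filter.Eventually.of_forall fun N => sqRem_nonneg N hx.le) ?_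
  filter_upwards [Filter.eventually_gt_atTop 0] with N hN
  refine (sqRem_le N hx.le hx'.le).trans ?_
  have hc := centralBinom_cast_pos N
  have h4 : (4 : ℝ) ^ N ≤ 2 * N * Nat.centralBinom N := by
    exact_mod_cast Nat.four_pow_le_two_mul_self_mul_centralBinom N hN
  have hp : (2 * sin x) ^ (2 * N) = 4 ^ N * (sin x ^ 2) ^ N := by
    rw [pow_mul, ← mul_pow]
    ring
  rw [hp]
  have h5 : (4 : ℝ) ^ N * (sin x ^ 2) ^ N / Nat.centralBinom N ≤ 2 * N * (sin x ^ 2) ^ N := by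
    rw [div_le_iff₀ hc]
    nlinarith [mul_le_mul_of_nonneg_right h4 (pow_nonneg (sq_nonneg (sin x)) N)]
  calc 4 * (4 ^ N * (sin x ^ 2) ^ N) / (Nat.centralBinom N : ℝ) / 2 * x ^ 2
      = 2 * x ^ 2 * (4 ^ N * (sin x ^ 2) ^ N / (Nat.centralBinom N : ℝ)) := by ring
    _ ≤ 2 * x ^ 2 * (2 * N * (sin x ^ 2) ^ N) := by gcongr
    _ = _ := by ring

lemma measurable_sqRem_mul_cot (N : ℕ) : Measurable fun x => sqRem N x * cot x := by
  simp only [cot_eq_cos_div_sin, sqRem]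
  fun_prop

lemma norm_sqRem_mul_cot_le (N : ℕ) {x : ℝ} (hx : 0 < x) (hx' : x ≤ π / 2) :
    ‖sqRem N x * cot x‖ ≤ 2 * x := by
  have hs : 0 < sin x := sin_pos_of_pos_of_lt_pi hx (by linarith [pi_pos])
  have hc : 0 ≤ cos x := cos_nonneg_of_neg_pi_div_two_le_of_le (by linarith [pi_pos]) hx'
  have hcot : 0 ≤ cot x := by
    rw [cot_eq_cos_div_sin]
    positivity
  have hxc : x * cot x ≤ 1 := by
    rw [cot_eq_cos_div_sin, ← mul_div_assoc, div_le_one hs]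
    rcases hx'.lt_or_eq with h | h
    · have hc' : 0 < cos x := cos_pos_of_mem_Ioo ⟨by linarith, h⟩
      have := le_tan hx.le h
      rwa [tan_eq_sin_div_cos, le_div_iff₀ hc'] at this
    · rw [h, cos_pi_div_two]
      simp
  rw [norm_of_nonneg (mul_nonneg (sqRem_nonneg N hx.le) hcot)]
  calc sqRem N x * cot x ≤ 2 * x ^ 2 * cot x := by
        gcongr
        exact sqRem_le_two_sq N x
    _ = 2 * x * (x * cot x) := by ring
    _ ≤ 2 * x * 1 := by gcongr
    _ = 2 * x := by ring

lemma intervalIntegrable_sq_mul_cot {t : ℝ} (h0 : 0 ≤ t) (h1 : t ≤ π / 2) :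
    IntervalIntegrable (fun x => 2 * x ^ 2 * cot x) MeasureTheory.volume 0 t := by
  have hR : (fun x => 2 * x ^ 2 * cot x) = fun x => sqRem 0 x * cot x := by simp [sqRem]
  rw [hR]
  have hg : IntervalIntegrable (fun x : ℝ => 2 * x) MeasureTheory.volume 0 t :=
    (by fun_prop : Continuous fun x : ℝ => 2 * x).intervalIntegrable _ _
  refine hg.mono_fun' (measurable_sqRem_mul_cot 0).aestronglyMeasurable ?_
  refine (MeasureTheory.ae_restrict_iff' measurableSet_uIoc).2 (.of_forall fun x hx => ?_)
  rw [Set.uIoc_of_le h0] at hx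
  exact norm_sqRem_mul_cot_le 0 hx.1 (hx.2.trans h1)

lemma two_sin_pow_mul_cot (n : ℕ) (x : ℝ) :
    (2 * sin x) ^ (2 * (n + 1)) * cot x = 2 * (2 * sin x) ^ (2 * n + 1) * cos x := by
  rw [cot_eq_cos_div_sin]
  -- At zeros of `sin` both sides vanish, so no restriction on `x` is needed.
  by_cases h : sin x = 0
  · simp [h]
  · field_simp
    ring

lemma intervalIntegrable_two_sin_pow_mul_cot (n : ℕ) (t : ℝ) :
    IntervalIntegrable (fun x => (2 * sin x) ^ (2 * (n + 1)) * cot x) MeasureTheory.volume 0 t := by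
  simp only [two_sin_pow_mul_cot]
  exact Continuous.intervalIntegrable (by fun_prop) _ _

lemma integral_two_sin_pow_mul_cot (n : ℕ) (t : ℝ) :
    ∫ x in (0 : ℝ)..t, (2 * sin x) ^ (2 * (n + 1)) * cot x =
      (2 * sin t) ^ (2 * (n + 1)) / (2 * ((n : ℝ) + 1)) := by
  rw [intervalIntegral.integral_eq_sub_of_hasDerivAt
    (f := fun x => (2 * sin x) ^ (2 * (n + 1)) / (2 * ((n : ℝ) + 1))) (fun x _ => ?_)
    (intervalIntegrable_two_sin_pow_mul_cot n t)]
  · simp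
  · rw [two_sin_pow_mul_cot]
    refine ((hasDerivAt_two_sin_pow (2 * n + 1) x).div_const (2 * ((n : ℝ) + 1))).congr_deriv ?_
    push_cast
    field_simp
    ring

lemma integral_sqRem_mul_cot (N : ℕ) {t : ℝ} (h0 : 0 ≤ t) (h1 : t ≤ π / 2) :
    ∫ x in (0 : ℝ)..t, sqRem N x * cot x = 2 * (∫ x in (0 : ℝ)..t, x ^ 2 * cot x) -
      (1 / 2) * ∑ n ∈ Finset.range N, (2 * sin t) ^ (2 * (n + 1)) /
        (((n : ℝ) + 1) ^ 3 * ((2 * (n + 1)).choose (n + 1) : ℝ)) := by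
  have hsplit : ∀ x, sqRem N x * cot x = 2 * x ^ 2 * cot x - ∑ n ∈ Finset.range N,
      (((n : ℝ) + 1) ^ 2 * (Nat.centralBinom (n + 1) : ℝ))⁻¹ *
        ((2 * sin x) ^ (2 * (n + 1)) * cot x) := by
    intro x
    rw [sqRem, sub_mul, Finset.sum_mul]
    congr 1
    refine Finset.sum_congr rfl fun n _ => ?_
    ring
  have hint : ∀ n ∈ Finset.range N, IntervalIntegrable (fun x =>
      (((n : ℝ) + 1) ^ 2 * (Nat.centralBinom (n + 1) : ℝ))⁻¹ *
        ((2 * sin x) ^ (2 * (n + 1)) * cot x)) MeasureTheory.volume 0 t :=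
    fun n _ => (intervalIntegrable_two_sin_pow_mul_cot n t).const_mul _
  simp only [hsplit]
  rw [intervalIntegral.integral_sub (intervalIntegrable_sq_mul_cot h0 h1)
    (by simpa only [Finset.sum_fn] using IntervalIntegrable.sum _ hint),
    intervalIntegral.integral_finsetSum hint]
  congr 1
  · simp only [mul_assoc, intervalIntegral.integral_const_mul]
  · rw [Finset.mul_sum]
    refine Finset.sum_congr rfl fun n _ => ?_
    rw [intervalIntegral.integral_const_mul, integral_two_sin_pow_mul_cot,
      ← Nat.centralBinom_eq_two_mul_choose]
    have := centralBinom_cast_pos (n + 1)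
    field_simp

lemma tendsto_integral_sqRem_mul_cot {t : ℝ} (h0 : 0 ≤ t) (h1 : t ≤ π / 2) :
    Filter.Tendsto (fun N => ∫ x in (0 : ℝ)..t, sqRem N x * cot x) Filter.atTop (nhds 0) := by
  have := intervalIntegral.tendsto_integral_filter_of_dominated_convergence
    (μ := MeasureTheory.volume) (a := 0) (b := t) (l := Filter.atTop)
    (F := fun N x => sqRem N x * cot x) (f := fun _ => 0) (fun x => 2 * x)
    (.of_forall fun N => (measurable_sqRem_mul_cot N).aestronglyMeasurable)
    (.of_forall fun N => .of_forall fun x hx => ?_)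
    ((by fun_prop : Continuous fun x : ℝ => 2 * x).intervalIntegrable _ _)
    (.of_forall fun x hx => ?_)
  · simpa using this
  · rw [Set.uIoc_of_le h0] at hx
    exact norm_sqRem_mul_cot_le N hx.1 (hx.2.trans h1)
  · rw [Set.uIoc_of_le h0] at hx
    rcases (hx.2.trans h1).lt_or_eq with h | h
    · simpa using (tendsto_sqRem hx.1 h).mul_const (cot x)
    -- At the endpoint `π/2` the factor `cot x` vanishes.
    · simp [h, cot_eq_cos_div_sin]

/-- For `0 ≤ t ≤ π/2`,
`∫_0^t x² cot x dx = (1/4) ∑_{n=1}^∞ (2 sin t)^{2n}/(n³ C(2n,n))`. -/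
theorem stmt_6 (t : ℝ) (h0 : 0 ≤ t) (h1 : t ≤ π / 2) :
    ∫ x in (0 : ℝ)..t, x ^ 2 * Real.cot x =
      (1 / 4) * ∑' n : ℕ, (2 * Real.sin t) ^ (2 * (n + 1)) /
        (((n : ℝ) + 1) ^ 3 * ((2 * (n + 1)).choose (n + 1) : ℝ)) := by
  have hlim := tendsto_integral_sqRem_mul_cot h0 h1
  simp only [fun N => integral_sqRem_mul_cot N h0 h1] at hlim
  have hsum : HasSum (fun n : ℕ => (2 * Real.sin t) ^ (2 * (n + 1)) /
      (((n : ℝ) + 1) ^ 3 * ((2 * (n + 1)).choose (n + 1) : ℝ)))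
      (4 * ∫ x in (0 : ℝ)..t, x ^ 2 * Real.cot x) := by
    rw [hasSum_iff_tendsto_nat_of_nonneg]
    · have := (hlim.const_sub (2 * ∫ x in (0 : ℝ)..t, x ^ 2 * Real.cot x)).const_mul 2
      convert this using 2 <;> ring
    · intro n
      rw [pow_mul]
      positivity
  rw [hsum.tsum_eq]
  ring
end

section
/- ∫_0^{π/2} x² cot x dx = −(7/8) ζ(3) + (π²/4) log 2. -/
open Real

/-!
Telescoping gives the conjugate Dirichlet kernel identity
`∑_{m=1}^{M} 2 sin (2 m x) = cot x - cos ((2 M + 1) x) / sin x`.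
Multiply by `x ^ 2` and integrate over `[0, π / 2]`. The function `x ^ 2 / sin x` extends
continuously to `0` as `x / sinc x`, so the last term tends to `0` by the Riemann-Lebesgue lemma
(`tendsto_integral_mul_cos`), and the integral of `x ^ 2 * cot x` is the limit of the partial sums
of `∫ 2 x ^ 2 sin (2 m x) = (π² / 4) (-1)^(m+1) / m + ((-1)^m - 1) / (2 m³)`.
Along even `M = 2 N` these partial sums are (`sum_even`)
`(π² / 4) (H_{2N} - H_N) - (Z_{2N} - Z_N / 8)`, where `H_N` and `Z_N` are the partial sums of
`∑ 1 / n` and `∑ 1 / n³`. Since `H_N - log N` converges, `H_{2N} - H_N → log 2`, and the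
limit is `(π² / 4) log 2 - (7 / 8) ζ(3)`.
-/

open Filter Topology MeasureTheory

lemma sin_mul_dirichlet_sum (x : ℝ) (M : ℕ) :
    sin x * ∑ n ∈ Finset.range M, 2 * sin (2 * ((n : ℝ) + 1) * x) =
      cos x - cos ((2 * (M : ℝ) + 1) * x) := by
  induction M with
  | zero => simp
  | succ k ih =>
    rw [Finset.sum_range_succ, mul_add, ih]
    push_cast
    have h1 : (2 * (k : ℝ) + 1) * x = 2 * ((k : ℝ) + 1) * x - x := by ring
    have h2 : (2 * ((k : ℝ) + 1) + 1) * x = 2 * ((k : ℝ) + 1) * x + x := by ring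
    rw [h1, h2, cos_sub, cos_add]
    ring

lemma sinc_ne_zero_of_mem {x : ℝ} (hx : x ∈ Set.Icc 0 (π / 2)) : sinc x ≠ 0 := by
  rcases hx.1.eq_or_lt with h | h
  · simp [← h]
  · rw [sinc_of_ne_zero h.ne']
    have := sin_pos_of_pos_of_lt_pi h (by linarith [hx.2, pi_pos])
    positivity

lemma continuousOn_div_sinc : ContinuousOn (fun x : ℝ => x / sinc x) (Set.Icc 0 (π / 2)) :=
  continuousOn_id.div continuous_sinc.continuousOn fun _ hx => sinc_ne_zero_of_mem hx

/-- The conjugate Dirichlet kernel identity multiplied by `x ^ 2`, in a form whose terms are all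
continuous on `[0, π / 2]`. -/
lemma div_sinc_mul_cos_sub {x : ℝ} (hx : x ∈ Set.Icc 0 (π / 2)) (M : ℕ) :
    x / sinc x * cos x - x / sinc x * cos ((2 * (M : ℝ) + 1) * x) =
      ∑ n ∈ Finset.range M, 2 * x ^ 2 * sin (2 * ((n : ℝ) + 1) * x) := by
  rcases hx.1.eq_or_lt with h | h
  · simp [← h]
  · have hs := sin_pos_of_pos_of_lt_pi h (by linarith [hx.2, pi_pos])
    rw [← mul_sub, ← sin_mul_dirichlet_sum, sinc_of_ne_zero h.ne', Finset.mul_sum, Finset.mul_sum]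
    refine Finset.sum_congr rfl fun n _ => ?_
    field_simp

lemma integral_sq_mul_sin (n : ℕ) :
    ∫ x in (0 : ℝ)..(π / 2), 2 * x ^ 2 * sin (2 * ((n : ℝ) + 1) * x) =
      π ^ 2 / 4 * ((-1) ^ n / ((n : ℝ) + 1)) - (1 + (-1) ^ n) / (2 * ((n : ℝ) + 1) ^ 3) := by
  have hm : (n : ℝ) + 1 ≠ 0 := by positivity
  set m : ℝ := (n : ℝ) + 1 with hmdef
  have hd : ∀ x ∈ Set.uIcc (0 : ℝ) (π / 2), HasDerivAt
      (fun x => -x ^ 2 * cos (2 * m * x) / m + x * sin (2 * m * x) / m ^ 2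
        + cos (2 * m * x) / (2 * m ^ 3)) (2 * x ^ 2 * sin (2 * m * x)) x := by
    intro x _
    have h0 : HasDerivAt (fun x : ℝ => 2 * m * x) (2 * m) x := by
      simpa using (hasDerivAt_id x).const_mul (2 * m)
    have hc := h0.cos
    have hs := h0.sin
    have h := ((((hasDerivAt_pow 2 x).neg.mul hc).div_const m).add
      (((hasDerivAt_id x).mul hs).div_const (m ^ 2))).add (hc.div_const (2 * m ^ 3))
    refine h.congr_deriv ?_
    simp
    field_simp
    ring
  rw [intervalIntegral.integral_eq_sub_of_hasDerivAt hd
    (Continuous.intervalIntegrable (by fun_prop) _ _)]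
  have ha : 2 * m * (π / 2) = ((n + 1 : ℕ) : ℝ) * π := by rw [hmdef]; push_cast; ring
  rw [ha, cos_nat_mul_pi, sin_nat_mul_pi, pow_succ]
  simp
  field_simp
  ring

/-- Riemann-Lebesgue along the frequencies `4 N + 1`, for the continuous extension of
`x ^ 2 / sin x`. -/
lemma tendsto_integral_mul_cos :
    Tendsto (fun N : ℕ => ∫ x in (0 : ℝ)..(π / 2),
      x / sinc x * cos ((2 * ((2 * N : ℕ) : ℝ) + 1) * x)) atTop (𝓝 0) := by
  have hpi : (0 : ℝ) ≤ π / 2 := by positivity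
  let f : ℝ → ℂ := (Set.Ioc 0 (π / 2)).indicator fun x => ((x / sinc x : ℝ) : ℂ)
  have hRL := Real.tendsto_integral_exp_smul_cocompact f
  -- The factor `2 π` compensates the normalization of the additive character `𝐞`.
  have hw : Tendsto (fun N : ℕ => (2 * ((2 * N : ℕ) : ℝ) + 1) / (2 * π)) atTop
      (cocompact ℝ) := by
    refine Tendsto.mono_right ?_ atTop_le_cocompact
    refine Tendsto.atTop_div_const (by positivity) ?_
    refine tendsto_atTop_mono (fun N => ?_) tendsto_natCast_atTop_atTop
    push_cast
    linarith [(Nat.cast_nonneg N : (0 : ℝ) ≤ N)]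
  have h := (Complex.continuous_re.tendsto _).comp (hRL.comp hw)
  rw [Complex.zero_re] at h
  refine h.congr fun N => ?_
  simp only [Function.comp_apply]
  have hf : ∀ w : ℝ, (fun v : ℝ => Real.fourierChar (-(v * w)) • f v) =
      (Set.Ioc 0 (π / 2)).indicator
        fun v => Complex.exp (↑(2 * π * -(v * w)) * Complex.I) * ((v / sinc v : ℝ) : ℂ) := by
    intro w
    ext v
    by_cases hv : v ∈ Set.Ioc 0 (π / 2) <;>
      simp [f, hv, Circle.smul_def, Real.fourierChar_apply]
  rw [hf, integral_indicator measurableSet_Ioc, ← RCLike.re_eq_complex_re, ← integral_re,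
    intervalIntegral.integral_of_le hpi]
  · refine integral_congr_ae (Eventually.of_forall fun v => ?_)
    simp only [RCLike.re_eq_complex_re, Complex.re_mul_ofReal, Complex.exp_ofReal_mul_I_re]
    rw [mul_comm]
    congr 1
    rw [← cos_neg]
    congr 1
    field_simp
  · refine IntegrableOn.mono_set ?_ Set.Ioc_subset_Icc_self
    refine ContinuousOn.integrableOn_compact isCompact_Icc ?_
    refine ContinuousOn.mul (by fun_prop) ?_
    exact Complex.continuous_ofReal.comp_continuousOn continuousOn_div_sinc

/-- Splitting into odd and even indices: `∑_{m ≤ 2N} (-1)^(m+1) / m = H_{2N} - H_N`, and the odd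
reciprocal cubes up to `2N` sum to `Z_{2N} - Z_N / 8`. -/
lemma sum_even (N : ℕ) :
    ∑ n ∈ Finset.range (2 * N), (π ^ 2 / 4 * ((-1) ^ n / ((n : ℝ) + 1))
        - (1 + (-1) ^ n) / (2 * ((n : ℝ) + 1) ^ 3)) =
      π ^ 2 / 4 * ((harmonic (2 * N) : ℝ) - harmonic N)
        - (∑ n ∈ Finset.range (2 * N), 1 / ((n : ℝ) + 1) ^ 3
          - 1 / 8 * ∑ n ∈ Finset.range N, 1 / ((n : ℝ) + 1) ^ 3) := by
  induction N with
  | zero => simp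
  | succ k ih =>
    have h2 : 2 * (k + 1) = 2 * k + 1 + 1 := by ring
    rw [h2]
    simp only [Finset.sum_range_succ, harmonic_succ]
    rw [ih]
    have he : ((-1 : ℝ)) ^ (2 * k) = 1 := by simp
    have ho : ((-1 : ℝ)) ^ (2 * k + 1) = -1 := by rw [pow_succ, he]; norm_num
    rw [ho, he]
    push_cast
    have : (k : ℝ) + 1 ≠ 0 := by positivity
    have : 2 * (k : ℝ) + 1 ≠ 0 := by positivity
    have h3 : 2 * (k : ℝ) + 1 + 1 = 2 * (k + 1) := by ring
    rw [h3]
    field_simp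
    ring

lemma tendsto_harmonic_two_mul_sub :
    Tendsto (fun N : ℕ => (harmonic (2 * N) : ℝ) - harmonic N) atTop (𝓝 (log 2)) := by
  have h1 := tendsto_harmonic_sub_log
  have h2 : Tendsto (fun N : ℕ => 2 * N) atTop atTop :=
    tendsto_id.const_mul_atTop' (by norm_num)
  have h := ((h1.comp h2).sub h1).add_const (log 2)
  rw [sub_self, zero_add] at h
  refine h.congr' ?_
  filter_upwards [eventually_gt_atTop 0] with N hN
  have hN' : (N : ℝ) ≠ 0 := by positivity
  simp only [Function.comp_apply]
  push_cast
  rw [log_mul two_ne_zero hN']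
  ring

/-- `∫_0^{π/2} x² cot x dx = −(7/8)ζ(3) + (π²/4) log 2`. -/
theorem stmt_7 :
    ∫ x in (0 : ℝ)..(π / 2), x ^ 2 * Real.cot x =
      -(7 / 8) * (∑' n : ℕ, 1 / ((n : ℝ) + 1) ^ 3) + (π ^ 2 / 4) * Real.log 2 := by
  have hIcc : Set.uIcc (0 : ℝ) (π / 2) = Set.Icc 0 (π / 2) := Set.uIcc_of_le (by positivity)
  have hcot : ∫ x in (0 : ℝ)..(π / 2), x ^ 2 * Real.cot x =
      ∫ x in (0 : ℝ)..(π / 2), x / sinc x * cos x := by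
    refine intervalIntegral.integral_congr fun x hx => ?_
    rw [hIcc] at hx
    rcases hx.1.eq_or_lt with h | h
    · simp [← h]
    · simp only [Real.cot_eq_cos_div_sin, sinc_of_ne_zero h.ne']
      have hs := sin_pos_of_pos_of_lt_pi h (by linarith [hx.2, pi_pos])
      field_simp
  have hint : ∀ c : ℝ, IntervalIntegrable (fun x => x / sinc x * cos (c * x)) volume 0 (π / 2) :=
    fun c => ContinuousOn.intervalIntegrable <| by
      rw [hIcc]
      exact continuousOn_div_sinc.mul (by fun_prop)
  have hfin : ∀ M : ℕ, (∫ x in (0 : ℝ)..(π / 2), x / sinc x * cos x)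
      - ∫ x in (0 : ℝ)..(π / 2), x / sinc x * cos ((2 * (M : ℝ) + 1) * x) =
      ∑ n ∈ Finset.range M, (π ^ 2 / 4 * ((-1) ^ n / ((n : ℝ) + 1))
        - (1 + (-1) ^ n) / (2 * ((n : ℝ) + 1) ^ 3)) := by
    intro M
    rw [← intervalIntegral.integral_sub (by simpa using hint 1) (hint _)]
    simp_rw [← integral_sq_mul_sin]
    rw [← intervalIntegral.integral_finsetSum
      fun n _ => Continuous.intervalIntegrable (by fun_prop) _ _]
    refine intervalIntegral.integral_congr fun x hx => ?_
    rw [hIcc] at hx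
    exact div_sinc_mul_cos_sub hx M
  have hsum : Summable fun n : ℕ => 1 / ((n : ℝ) + 1) ^ 3 := by
    have := (summable_nat_add_iff 1).2
      (Real.summable_one_div_nat_pow.2 (by norm_num : 1 < 3))
    simpa using this
  have hZ := hsum.hasSum.tendsto_sum_nat
  have h2 : Tendsto (fun N : ℕ => 2 * N) atTop atTop :=
    tendsto_id.const_mul_atTop' (by norm_num)
  have hR := (tendsto_harmonic_two_mul_sub.const_mul (π ^ 2 / 4)).sub
    ((hZ.comp h2).sub (hZ.const_mul (1 / 8)))
  have hL := tendsto_integral_mul_cos.const_sub (∫ x in (0 : ℝ)..(π / 2), x / sinc x * cos x)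
  rw [hcot]
  have := tendsto_nhds_unique hL (hR.congr fun N => ((hfin (2 * N)).trans (sum_even N)).symm)
  rw [sub_zero] at this
  rw [this]
  ring
end

section
/- ζ(3) = (2/7) π² log 2 − (2/7) ∑_{n=1}^∞ 4ⁿ / (n³ C(2n,n)). -/
/-!
The value `A = ∫₀^{π/2} t² cot t dt` is computed in two ways.

* On `[0, π/2]` one has `2t² = ∑_{n≥1} 4ⁿ sin^{2n} t / (n² C(2n,n))`. The remainder `R N` of this
  series vanishes to second order at `0` and has second derivative `4 q_N sin^{2N}`
  (`hasDerivAt_R'`), whence `0 ≤ R N ≤ 2π sin^{2N+1}` (`R_nonneg`, `R_le`). Integrating against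
  `cot` with `∫ sin^{2n-1} cos = 1/(2n)` gives `4A = ∑ 4ⁿ / (n³ C(2n,n))` (`tendsto_partial`).
* Replacing `cot t` by `2 ∑_{k≤N} sin 2kt + cos ((2N+1)t) / sin t` (`dirichlet`), integrating
  `t² sin 2kt` by parts and discarding the last term by the Riemann–Lebesgue lemma gives
  `A = (π²/4) log 2 - (7/8) ζ(3)` (`integral_cot`).
-/

open Real

namespace Apery
open Filter Topology MeasureTheory intervalIntegral

/-- The ratio `4ⁿ / C(2n,n)`. -/
noncomputable def q (n : ℕ) : ℝ := 4 ^ n / (n.centralBinom : ℝ)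

lemma q_pos (n : ℕ) : 0 < q n := by
  have : (0 : ℝ) < n.centralBinom := by exact_mod_cast n.centralBinom_pos
  unfold q; positivity

lemma q_le (n : ℕ) : q n ≤ 2 * n + 1 := by
  have : (0 : ℝ) < n.centralBinom := by exact_mod_cast n.centralBinom_pos
  have h := Nat.four_pow_le_two_mul_add_one_mul_central_binom n
  unfold q
  rw [div_le_iff₀ this]
  exact_mod_cast h

lemma q_succ (n : ℕ) : q (n + 1) * (2 * n + 1) = q n * (2 * n + 2) := by
  have h1 : (0 : ℝ) < n.centralBinom := by exact_mod_cast n.centralBinom_pos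
  have h2 : (0 : ℝ) < (n + 1).centralBinom := by exact_mod_cast (n + 1).centralBinom_pos
  have h : ((n : ℝ) + 1) * (n + 1).centralBinom = 2 * (2 * n + 1) * n.centralBinom := by
    exact_mod_cast Nat.succ_mul_centralBinom_succ n
  unfold q
  rw [div_mul_eq_mul_div, div_mul_eq_mul_div, div_eq_div_iff h2.ne' h1.ne', pow_succ]
  linear_combination (-2 * 4 ^ n : ℝ) * h

/-- The coefficient of `sin^{2(n+1)}` in the expansion of `2t²`, namely
`4^{n+1} / ((n+1)² C(2n+2,n+1))`. -/
noncomputable def w (n : ℕ) : ℝ := q (n + 1) / ((n : ℝ) + 1) ^ 2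

/-- The remainder of the expansion `2t² = ∑ w n sin^{2n+2} t` after `N` terms. -/
noncomputable def R (N : ℕ) (t : ℝ) : ℝ :=
  2 * t ^ 2 - ∑ n ∈ Finset.range N, w n * sin t ^ (2 * n + 2)

/-- The derivative of `R N`. -/
noncomputable def R' (N : ℕ) (t : ℝ) : ℝ :=
  4 * t - ∑ n ∈ Finset.range N, w n * ((2 * n + 2) * sin t ^ (2 * n + 1) * cos t)

lemma hasDerivAt_R (N : ℕ) (t : ℝ) : HasDerivAt (R N) (R' N t) t := by
  unfold R R'
  refine HasDerivAt.sub ?_ (HasDerivAt.fun_sum fun n _ => ?_)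
  · exact (((hasDerivAt_id' t).pow 2).const_mul 2).congr_deriv (by norm_num; ring)
  · exact (((hasDerivAt_sin t).pow (2 * n + 2)).const_mul (w n)).congr_deriv (by
      push_cast [Nat.add_sub_cancel]; rfl)

/-- The second derivatives `(sin^{2m})'' = 2m(2m-1) sin^{2m-2} - (2m)² sin^{2m}` telescope against
the coefficients `w`, so the second derivative of the remainder is a single monomial. -/
lemma hasDerivAt_R' (N : ℕ) (t : ℝ) : HasDerivAt (R' N) (4 * q N * sin t ^ (2 * N)) t := by
  induction N with
  | zero =>
    have h0 : R' 0 = fun t => 4 * t := by funext s; simp [R']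
    rw [h0]
    simpa [q] using (hasDerivAt_id' t).const_mul (4 : ℝ)
  | succ N ih =>
    have hR : R' (N + 1) =
        fun t => R' N t - w N * ((2 * N + 2) * sin t ^ (2 * N + 1) * cos t) := by
      funext s; simp only [R', Finset.sum_range_succ]; ring
    rw [hR]
    refine (ih.sub (((((hasDerivAt_sin t).pow (2 * N + 1)).const_mul (2 * N + 2 : ℝ)).mul
      (hasDerivAt_cos t)).const_mul (w N))).congr_deriv ?_
    have hN : (N : ℝ) + 1 ≠ 0 := by positivity
    have hw : w N * (N + 1) ^ 2 = q (N + 1) := by unfold w; field_simp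
    have hq := q_succ N
    rw [← hw] at hq ⊢
    have hq' : q N * 2 = w N * (N + 1) * (2 * N + 1) := by
      apply mul_right_cancel₀ hN; linear_combination -hq
    have hc : cos t ^ 2 = 1 - sin t ^ 2 := by rw [← sin_sq_add_cos_sq t]; ring
    simp only [Nat.add_sub_cancel, Pi.pow_apply]
    push_cast
    rw [show 2 * (N + 1) = 2 * N + 2 by ring, pow_add, pow_add]
    linear_combination (2 * sin t ^ (2 * N)) * hq' -
      (w N * (2 * N + 2) * (2 * N + 1) * sin t ^ (2 * N)) * hc

lemma R'_nonneg (N : ℕ) {t : ℝ} (h0 : 0 ≤ t) : 0 ≤ R' N t := by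
  have hm : Monotone (R' N) := monotone_of_deriv_nonneg
    (fun t => (hasDerivAt_R' N t).differentiableAt) fun t => by
      rw [(hasDerivAt_R' N t).deriv, pow_mul]
      have := q_pos N
      positivity
  simpa [R'] using hm h0

lemma R_nonneg (N : ℕ) {t : ℝ} (h0 : 0 ≤ t) : 0 ≤ R N t := by
  have hm : MonotoneOn (R N) (Set.Ici 0) := monotoneOn_of_deriv_nonneg (convex_Ici 0)
    (fun t _ => (hasDerivAt_R N t).continuousAt.continuousWithinAt)
    (fun t _ => (hasDerivAt_R N t).differentiableAt.differentiableWithinAt) fun t ht => by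
      rw [(hasDerivAt_R N t).deriv]
      rw [interior_Ici] at ht
      exact R'_nonneg N (le_of_lt ht)
  simpa [R] using hm Set.self_mem_Ici h0 h0

/-- The remainder is at most a constant times the next odd power of `sin`: the function
`R + (π/2 - t) R' - c sin^{2N+1}` vanishes at `0` and is decreasing on `[0, π/2]`, by Jordan's
inequality `π/2 - t ≤ (π/2) cos t`. -/
lemma R_le (N : ℕ) {t : ℝ} (h0 : 0 ≤ t) (h1 : t ≤ π / 2) :
    R N t ≤ 2 * π * sin t ^ (2 * N + 1) := by
  set c : ℝ := 2 * π * q N / (2 * N + 1) with hc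
  have hd : ∀ t, HasDerivAt
      (fun t => R N t + (π / 2 - t) * R' N t - c * sin t ^ (2 * N + 1))
      ((π / 2 - t - π / 2 * cos t) * (4 * q N * sin t ^ (2 * N))) t := fun t => by
    refine (((hasDerivAt_R N t).add (((hasDerivAt_id' t).const_sub (π / 2)).mul
      (hasDerivAt_R' N t))).sub
      (((hasDerivAt_sin t).pow (2 * N + 1)).const_mul c)).congr_deriv ?_
    have : c * (2 * N + 1) = 2 * π * q N := by rw [hc]; field_simp
    simp only [Nat.add_sub_cancel]
    push_cast
    linear_combination (-(sin t ^ (2 * N) * cos t)) * this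
  have hm : AntitoneOn (fun t => R N t + (π / 2 - t) * R' N t - c * sin t ^ (2 * N + 1))
      (Set.Icc 0 (π / 2)) := antitoneOn_of_deriv_nonpos (convex_Icc _ _)
    (fun t _ => (hd t).continuousAt.continuousWithinAt)
    (fun t _ => (hd t).differentiableAt.differentiableWithinAt) fun t ht => by
      rw [(hd t).deriv]
      rw [interior_Icc] at ht
      have hq := q_pos N
      have hs : 0 ≤ sin t ^ (2 * N) := by rw [pow_mul]; positivity
      have hj := mul_le_sin (x := π / 2 - t) (by linarith [ht.2]) (by linarith [ht.1])
      rw [sin_pi_div_two_sub, div_mul_eq_mul_div, div_le_iff₀ pi_pos] at hj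
      exact mul_nonpos_of_nonpos_of_nonneg (by linarith) (by positivity)
  have h := hm ⟨le_rfl, by positivity⟩ ⟨h0, h1⟩ h0
  have hz : R N 0 = 0 := by simp [R]
  have hz' : R' N 0 = 0 := by simp [R']
  simp only [hz, hz', sin_zero] at h
  have h2 : 0 ≤ (π / 2 - t) * R' N t := mul_nonneg (by linarith) (R'_nonneg N h0)
  have hs : 0 ≤ sin t := sin_nonneg_of_nonneg_of_le_pi h0 (by linarith [pi_pos])
  have hcle : c ≤ 2 * π := by
    rw [hc, div_le_iff₀ (by positivity)]
    exact mul_le_mul_of_nonneg_left (q_le N) (by positivity)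
  have := mul_le_mul_of_nonneg_right hcle (pow_nonneg hs (2 * N + 1))
  simp at h
  linarith

/-- The function `t² / sin t`; the junk value `0 / 0 = 0` at the origin is also the limit there. -/
noncomputable def g (t : ℝ) : ℝ := t ^ 2 / sin t

lemma g_integrable : IntervalIntegrable g volume 0 (π / 2) := by
  rw [intervalIntegrable_iff_integrableOn_Ioc_of_le (by positivity)]
  refine Measure.integrableOn_of_bounded (M := π ^ 2 / 4) (by simp)
    ((by fun_prop : Measurable fun t : ℝ => t ^ 2).div measurable_sin).aestronglyMeasurable ?_
  refine (ae_restrict_iff' measurableSet_Ioc).2 (ae_of_all _ fun t ht => ?_)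
  have hs := mul_le_sin ht.1.le ht.2
  have hs0 : 0 < sin t := sin_pos_of_pos_of_lt_pi ht.1 (by linarith [ht.2, pi_pos])
  rw [g, norm_of_nonneg (by positivity), div_le_iff₀ hs0]
  have h1 : t ≤ π / 2 * sin t := by
    have : π / 2 * (2 / π * t) = t := by field_simp
    calc t = π / 2 * (2 / π * t) := this.symm
      _ ≤ _ := by gcongr
  have := ht.1
  nlinarith [ht.2, mul_nonneg pi_pos.le hs0.le]

lemma cos_mul_g_integrable (a : ℝ) :
    IntervalIntegrable (fun t => cos (a * t) * g t) volume 0 (π / 2) :=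
  g_integrable.continuousOn_mul (by fun_prop)

lemma integral_sin_pow_cos (m : ℕ) :
    ∫ t in (0 : ℝ)..(π / 2), sin t ^ m * cos t = 1 / (m + 1) := by
  rw [integral_eq_sub_of_hasDerivAt (f := fun t => sin t ^ (m + 1) / (m + 1))]
  · simp
  · intro t _
    refine (((hasDerivAt_sin t).pow (m + 1)).div_const _).congr_deriv ?_
    simp only [Nat.add_sub_cancel]; push_cast
    have : (m : ℝ) + 1 ≠ 0 := by positivity
    field_simp
  · exact Continuous.intervalIntegrable (by fun_prop) _ _

/-- Integrating `2t² = ∑ w n sin^{2n+2} t` against `cot t`: the error after `N` terms lies between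
`0` and `2π ∫ sin^{2N} cos = 2π / (2N+1)`. -/
lemma tendsto_partial :
    Tendsto (fun N => ∑ n ∈ Finset.range N, (4 : ℝ) ^ (n + 1) /
      (((n : ℝ) + 1) ^ 3 * ((2 * (n + 1)).choose (n + 1) : ℝ))) atTop
      (𝓝 (4 * ∫ t in (0 : ℝ)..(π / 2), cos t * g t)) := by
  set A := ∫ t in (0 : ℝ)..(π / 2), cos t * g t with hA
  have hgi : IntervalIntegrable (fun t => cos t * g t) volume 0 (π / 2) := by
    simpa using cos_mul_g_integrable 1
  set F : ℕ → ℝ → ℝ := fun N t =>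
    2 * (cos t * g t) - ∑ n ∈ Finset.range N, w n * (sin t ^ (2 * n + 1) * cos t) with hF
  have hsi : ∀ N : ℕ, IntervalIntegrable
      (fun t => ∑ n ∈ Finset.range N, w n * (sin t ^ (2 * n + 1) * cos t)) volume 0 (π / 2) :=
    fun N => Continuous.intervalIntegrable (by fun_prop) _ _
  have hFi : ∀ N, IntervalIntegrable (F N) volume 0 (π / 2) := fun N =>
    (hgi.const_mul 2).sub (hsi N)
  have hint : ∀ N, ∫ t in (0 : ℝ)..(π / 2), F N t = 2 * A - (1 / 2) *
      ∑ n ∈ Finset.range N, (4 : ℝ) ^ (n + 1) /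
      (((n : ℝ) + 1) ^ 3 * ((2 * (n + 1)).choose (n + 1) : ℝ)) := fun N => by
    rw [hF]
    simp only
    rw [integral_sub (hgi.const_mul 2) (hsi N), intervalIntegral.integral_const_mul,
      integral_finsetSum fun n _ => Continuous.intervalIntegrable (by fun_prop) _ _,
      Finset.mul_sum]
    congr 1
    refine Finset.sum_congr rfl fun n _ => ?_
    rw [intervalIntegral.integral_const_mul, integral_sin_pow_cos, w, q, Nat.centralBinom]
    have : (n : ℝ) + 1 ≠ 0 := by positivity
    have h2 : (((2 * (n + 1)).choose (n + 1) : ℕ) : ℝ) ≠ 0 := by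
      exact_mod_cast (n + 1).centralBinom_ne_zero
    push_cast
    rw [show (2 * (n : ℝ) + 1 + 1) = 2 * (n + 1) by ring]
    field_simp
  have hbd : ∀ N, ∀ t ∈ Set.Ioc 0 (π / 2),
      0 ≤ F N t ∧ F N t ≤ 2 * π * (sin t ^ (2 * N) * cos t) := fun N t ht => by
    have hs0 : 0 < sin t := sin_pos_of_pos_of_lt_pi ht.1 (by linarith [ht.2, pi_pos])
    have hc0 : 0 ≤ cos t := cos_nonneg_of_mem_Icc ⟨by linarith [ht.1, pi_pos], ht.2⟩
    have hFR : F N t = R N t * (cos t / sin t) := by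
      simp only [hF, R, g, sub_mul, Finset.sum_mul]
      congr 1
      · ring
      · refine Finset.sum_congr rfl fun n _ => ?_
        field_simp
        ring
    rw [hFR]
    have h1 := R_nonneg N ht.1.le
    refine ⟨by positivity, ?_⟩
    calc R N t * (cos t / sin t) ≤ 2 * π * sin t ^ (2 * N + 1) * (cos t / sin t) := by
          gcongr; exact R_le N ht.1.le ht.2
      _ = _ := by field_simp; ring
  have hlim : Tendsto (fun N => ∫ t in (0 : ℝ)..(π / 2), F N t) atTop (𝓝 0) := by
    have hup : Tendsto (fun N : ℕ => 2 * π * (1 / ((2 * N : ℕ) + 1 : ℝ))) atTop (𝓝 0) := by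
      have := (tendsto_one_div_add_atTop_nhds_zero_nat (𝕜 := ℝ)).comp
        (tendsto_id.const_mul_atTop' (r := 2) (by norm_num))
      simpa using this.const_mul (2 * π)
    refine tendsto_of_tendsto_of_tendsto_of_le_of_le tendsto_const_nhds hup (fun N => ?_)
      fun N => ?_
    · have := integral_mono_on_of_le_Ioo (f := fun _ => (0 : ℝ)) (by positivity)
        (by simp) (hFi N) fun t ht => (hbd N t ⟨ht.1, ht.2.le⟩).1
      simpa using this
    · simp only
      rw [← integral_sin_pow_cos, ← intervalIntegral.integral_const_mul]
      exact integral_mono_on_of_le_Ioo (by positivity) (hFi N)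
        (Continuous.intervalIntegrable (by fun_prop) _ _)
        fun t ht => (hbd N t ⟨ht.1, ht.2.le⟩).2
  simp_rw [hint] at hlim
  have := (hlim.const_sub (2 * A)).const_mul 2
  refine (this.congr fun N => ?_).trans_eq ?_
  · ring
  · ring_nf

/-- The alternating harmonic series, by Abel's limit theorem applied to `log (1 + x) / x`. -/
lemma tendsto_log_two :
    Tendsto (fun N => ∑ n ∈ Finset.range N, (-1 : ℝ) ^ n * (1 / ((n : ℝ) + 1))) atTop
      (𝓝 (log 2)) := by
  obtain ⟨l, hl⟩ := Antitone.tendsto_alternating_series_of_tendsto_zero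
    (f := fun n : ℕ => 1 / ((n : ℝ) + 1)) (fun a b h => by dsimp only; gcongr)
    tendsto_one_div_add_atTop_nhds_zero_nat
  have h1 := Real.tendsto_tsum_powerSeries_nhdsWithin_lt hl
  have h2 : Tendsto (fun x : ℝ => log (1 + x) / x) (𝓝[<] 1) (𝓝 (log (1 + 1) / 1)) := by
    refine Tendsto.mono_left ?_ nhdsWithin_le_nhds
    have : ContinuousAt (fun x : ℝ => log (1 + x) / x) 1 := by
      fun_prop (disch := norm_num)
    exact this
  have h3 : (fun x : ℝ => log (1 + x) / x) =ᶠ[𝓝[<] 1]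
      fun x => ∑' n : ℕ, (-1 : ℝ) ^ n * (1 / ((n : ℝ) + 1)) * x ^ n := by
    filter_upwards [Ioo_mem_nhdsLT (zero_lt_one (α := ℝ))] with x hx
    have := hasSum_pow_div_log_of_abs_lt_one (x := -x) (by
      rw [abs_neg, abs_of_pos hx.1]; exact hx.2)
    rw [sub_neg_eq_add] at this
    have h := this.mul_left (-1 / x)
    rw [show -1 / x * -log (1 + x) = log (1 + x) / x by ring] at h
    rw [← h.tsum_eq]
    refine tsum_congr fun n => ?_
    have := hx.1.ne'
    rw [neg_pow x, pow_succ, pow_succ]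
    field_simp
  have h4 := tendsto_nhds_unique h1 (h2.congr' h3)
  rw [h4] at hl
  norm_num at hl
  simpa using hl

lemma tendsto_riemann_lebesgue :
    Tendsto (fun N : ℕ => ∫ t in (0 : ℝ)..(π / 2), cos ((2 * N + 1) * t) * g t) atTop (𝓝 0) := by
  have h := Real.tendsto_integral_exp_smul_cocompact
    ((Set.Ioc 0 (π / 2)).indicator fun t => (g t : ℂ))
  have hw : Tendsto (fun N : ℕ => (2 * N + 1 : ℝ) / (2 * π)) atTop (cocompact ℝ) := by
    refine Tendsto.mono_right ?_ atTop_le_cocompact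
    refine Tendsto.atTop_div_const (by positivity) ?_
    exact tendsto_atTop_add_const_right _ _
      (tendsto_natCast_atTop_atTop.const_mul_atTop (by norm_num))
  have h2 := (Complex.continuous_re.tendsto _).comp (h.comp hw)
  rw [Complex.zero_re] at h2
  refine h2.congr fun N => ?_
  simp only [Function.comp]
  have hpt : (fun v : ℝ => Real.fourierChar (-(v * ((2 * N + 1 : ℝ) / (2 * π)))) •
      (Set.Ioc 0 (π / 2)).indicator (fun t => (g t : ℂ)) v) =
      (Set.Ioc 0 (π / 2)).indicator fun v =>
        Complex.exp ((-((2 * N + 1) * v) : ℝ) * Complex.I) * (g v : ℂ) := by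
    funext v
    by_cases hv : v ∈ Set.Ioc 0 (π / 2)
    · rw [Set.indicator_of_mem hv, Set.indicator_of_mem hv, Circle.smul_def,
        Real.fourierChar_apply, smul_eq_mul]
      congr 4
      field_simp
    · simp [hv]
  rw [hpt, MeasureTheory.integral_indicator measurableSet_Ioc,
    ← intervalIntegral.integral_of_le (by positivity)]
  have hi : IntervalIntegrable (fun v : ℝ =>
      Complex.exp ((-((2 * N + 1) * v) : ℝ) * Complex.I) * (g v : ℂ)) volume 0 (π / 2) := by
    refine IntervalIntegrable.continuousOn_mul ?_ (by fun_prop)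
    exact ⟨g_integrable.1.ofReal, g_integrable.2.ofReal⟩
  have := Complex.reCLM.intervalIntegral_comp_comm hi
  simp only [Complex.reCLM_apply] at this
  rw [← this]
  refine integral_congr fun v _ => ?_
  simp only [Complex.re_mul_ofReal, Complex.exp_ofReal_mul_I_re, cos_neg]

lemma integral_sq_sin (n : ℕ) :
    ∫ t in (0 : ℝ)..(π / 2), t ^ 2 * sin (2 * (n + 1) * t) =
      π ^ 2 / 8 * ((-1) ^ n * (1 / ((n : ℝ) + 1))) -
        1 / 4 * ((1 - (-1) ^ (n + 1)) / ((n + 1 : ℕ) : ℝ) ^ 3) := by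
  have hk : (n : ℝ) + 1 ≠ 0 := by positivity
  set k : ℝ := (n : ℝ) + 1 with hkd
  rw [integral_eq_sub_of_hasDerivAt (f := fun t => -t ^ 2 * cos (2 * k * t) / (2 * k) +
    t * sin (2 * k * t) / (2 * k ^ 2) + cos (2 * k * t) / (4 * k ^ 3))]
  · have h1 : 2 * k * (π / 2) = (n + 1 : ℕ) * π := by push_cast; ring
    simp only [h1, cos_nat_mul_pi, sin_nat_mul_pi, mul_zero, cos_zero, sin_zero]
    push_cast
    rw [← hkd, pow_succ]
    field_simp
    ring
  · intro t _
    have hl : HasDerivAt (fun t => 2 * k * t) (2 * k) t := by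
      simpa using (hasDerivAt_id' t).const_mul (2 * k)
    have hc := (hasDerivAt_cos (2 * k * t)).comp t hl
    have hs := (hasDerivAt_sin (2 * k * t)).comp t hl
    refine (((((hasDerivAt_pow 2 t).neg.mul hc).div_const (2 * k)).add
      (((hasDerivAt_id' t).mul hs).div_const (2 * k ^ 2))).add
      (hc.div_const (4 * k ^ 3))).congr_deriv ?_
    simp [Function.comp]
    field_simp
    ring
  · exact Continuous.intervalIntegrable (by fun_prop) _ _

/-- The conjugate Dirichlet kernel: `cot t = 2 ∑_{k ≤ N} sin 2kt + cos ((2N+1)t) / sin t`. -/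
lemma dirichlet (N : ℕ) (t : ℝ) :
    2 * sin t * ∑ n ∈ Finset.range N, sin (2 * (n + 1) * t) = cos t - cos ((2 * N + 1) * t) := by
  induction N with
  | zero => simp
  | succ N ih =>
    rw [Finset.sum_range_succ, mul_add, ih]
    push_cast
    have h1 : (2 * (N : ℝ) + 1) * t = 2 * (N + 1) * t - t := by ring
    have h2 : (2 * ((N : ℝ) + 1) + 1) * t = 2 * (N + 1) * t + t := by ring
    rw [h1, h2, cos_sub, cos_add]
    ring

/-- The terms with even denominator contribute `ζ(3)/8`, so twice the odd part is `7/4 ζ(3)`. -/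
lemma hasSum_odd (z : ℝ) (hz : HasSum (fun n : ℕ => 1 / ((n : ℝ) + 1) ^ 3) z) :
    HasSum (fun n : ℕ => (1 - (-1 : ℝ) ^ (n + 1)) / ((n + 1 : ℕ) : ℝ) ^ 3) (7 / 4 * z) := by
  have h0 : HasSum (fun n : ℕ => 1 / (n : ℝ) ^ 3) z := by
    rw [← hasSum_nat_add_iff' 1]; simpa using hz
  have he : HasSum (fun n : ℕ => (1 + (-1 : ℝ) ^ n) / (n : ℝ) ^ 3) (1 / 4 * z + 0) := by
    refine HasSum.even_add_odd ?_ ?_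
    · have hf : (fun n : ℕ => (1 + (-1 : ℝ) ^ (2 * n)) / ((2 * n : ℕ) : ℝ) ^ 3) =
          fun n : ℕ => 1 / 4 * (1 / (n : ℝ) ^ 3) := by
        funext n
        rw [pow_mul, neg_one_sq, one_pow]
        push_cast
        rw [mul_pow, div_mul_div_comm, div_mul_eq_div_div]
        norm_num [div_div]
      rw [hf]
      exact h0.mul_left (1 / 4)
    · simp [pow_succ, pow_mul, hasSum_zero]
  have := (h0.mul_left 2).sub he
  have h1 : HasSum (fun n : ℕ => (1 - (-1 : ℝ) ^ n) / (n : ℝ) ^ 3) (7 / 4 * z) := by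
    have hf : (fun n : ℕ => (1 - (-1 : ℝ) ^ n) / (n : ℝ) ^ 3) =
        fun n : ℕ => 2 * (1 / (n : ℝ) ^ 3) - (1 + (-1 : ℝ) ^ n) / (n : ℝ) ^ 3 := by
      funext n; ring
    rw [hf, show 7 / 4 * z = 2 * z - (1 / 4 * z + 0) by ring]
    exact this
  rw [← hasSum_nat_add_iff' 1] at h1
  simpa using h1

lemma integral_cot (z : ℝ) (hz : HasSum (fun n : ℕ => 1 / ((n : ℝ) + 1) ^ 3) z) :
    ∫ t in (0 : ℝ)..(π / 2), cos t * g t = π ^ 2 / 4 * log 2 - 7 / 8 * z := by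
  have hfin : ∀ N : ℕ, ∫ t in (0 : ℝ)..(π / 2), cos t * g t =
      2 * ∑ n ∈ Finset.range N, (π ^ 2 / 8 * ((-1) ^ n * (1 / ((n : ℝ) + 1))) -
        1 / 4 * ((1 - (-1) ^ (n + 1)) / ((n + 1 : ℕ) : ℝ) ^ 3)) +
      ∫ t in (0 : ℝ)..(π / 2), cos ((2 * N + 1) * t) * g t := fun N => by
    simp_rw [← integral_sq_sin]
    rw [← integral_finsetSum fun n _ => Continuous.intervalIntegrable (by fun_prop) _ _,
      ← intervalIntegral.integral_const_mul, ← integral_add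
      (Continuous.intervalIntegrable (by fun_prop) _ _) (cos_mul_g_integrable _)]
    refine integral_congr_ae (ae_of_all _ fun t ht => ?_)
    rw [Set.uIoc_of_le (by positivity)] at ht
    have hs0 : 0 < sin t := sin_pos_of_pos_of_lt_pi ht.1 (by linarith [ht.2, pi_pos])
    have hd : cos t = 2 * sin t * ∑ n ∈ Finset.range N, sin (2 * (n + 1) * t) +
        cos ((2 * N + 1) * t) := by rw [dirichlet]; ring
    rw [← Finset.mul_sum, g]
    conv_lhs => rw [hd]
    generalize ∑ n ∈ Finset.range N, sin (2 * ((n : ℝ) + 1) * t) = S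
    generalize cos ((2 * (N : ℝ) + 1) * t) = C
    field_simp
  have hlim := (((tendsto_log_two.const_mul (π ^ 2 / 8)).sub
    ((hasSum_odd z hz).tendsto_sum_nat.const_mul (1 / 4))).const_mul 2).add
    tendsto_riemann_lebesgue
  have h := tendsto_nhds_unique hlim ((tendsto_const_nhds
    (x := ∫ t in (0 : ℝ)..(π / 2), cos t * g t)).congr fun N => by
    rw [hfin N, Finset.sum_sub_distrib, Finset.mul_sum, Finset.mul_sum])
  rw [← h]; ring

end Apery
/-- `ζ(3) = (2/7)π² log 2 − (2/7) ∑_{n=1}^∞ 4ⁿ/(n³ C(2n,n))`. -/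
theorem stmt_8 :
    (∑' n : ℕ, 1 / ((n : ℝ) + 1) ^ 3) =
      (2 / 7) * π ^ 2 * Real.log 2 -
        (2 / 7) * ∑' n : ℕ, (4 : ℝ) ^ (n + 1) /
          (((n : ℝ) + 1) ^ 3 * ((2 * (n + 1)).choose (n + 1) : ℝ)) := by
  have hs : Summable fun n : ℕ => 1 / ((n : ℝ) + 1) ^ 3 := by
    have := (summable_nat_add_iff 1).2 (Real.summable_one_div_nat_pow (p := 3).2 (by norm_num))
    simpa using this
  have hS := (hasSum_iff_tendsto_nat_of_nonneg (fun n => by positivity) _).2 Apery.tendsto_partial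
  rw [hS.tsum_eq, Apery.integral_cot _ hs.hasSum]
  ring
end

section
/- ∫_0^{π/2} x³ cot x dx = (π³/8) log 2 − (9π/16) ζ(3). -/
/-!
The finite identity `cot x = 2 ∑_{k=1}^n sin (2kx) + cos ((2n+1)x) / sin x`
(`cot_mul_sin_eq`), multiplied by `x³` and integrated over `[0, π/2]`, expresses the integral as a
finite sum of elementary integrals plus the remainder
`∫ (x³ / sin x) cos ((2n+1)x)`. Since `x³ / sin x` is integrable (Jordan's inequality), the
remainder tends to `0` by the Riemann–Lebesgue lemma (`tendsto_remainder`). Each elementary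
integral equals `π³/16 · (-1)^(k+1)/k - 3π/8 · (-1)^(k+1)/k³` (`integral_cube_mul_sin`), so the
value is `π³/8 · ∑ (-1)^(k+1)/k - 3π/4 · ∑ (-1)^(k+1)/k³`. Along even partial sums the alternating
sums reduce to non-alternating ones (`alternating_sum_two_mul`): the first is `H_{2N} - H_N → log 2`
and the second tends to `3/4 · ζ(3)`.
-/

open Real
open Filter Topology MeasureTheory

/-- The partial sum and remainder of the (divergent) Fourier series of `cot`, cleared of the
denominator `sin x`; the sum telescopes by the addition formulas. -/
lemma cot_mul_sin_eq (x : ℝ) (n : ℕ) :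
    cos x = sin x * (∑ k ∈ Finset.range n, 2 * sin (2 * ((k : ℝ) + 1) * x))
      + cos ((2 * (n : ℝ) + 1) * x) := by
  induction n with
  | zero => simp
  | succ n ih =>
    rw [Finset.sum_range_succ]
    push_cast
    have h1 : cos ((2 * (n : ℝ) + 1) * x) = cos (2 * ((n : ℝ) + 1) * x - x) := by
      congr 1; ring
    have h2 : cos ((2 * ((n : ℝ) + 1) + 1) * x) = cos (2 * ((n : ℝ) + 1) * x + x) := by
      congr 1; ring
    rw [h1, cos_sub] at ih
    rw [h2, cos_add]
    linear_combination ih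

lemma intervalIntegrable_cube_div_sin :
    IntervalIntegrable (fun x : ℝ => x ^ 3 / sin x) volume 0 (π / 2) := by
  rw [intervalIntegrable_iff_integrableOn_Ioc_of_le pi_div_two_pos.le]
  refine Measure.integrableOn_of_bounded (M := (π / 2) ^ 3) (by simp)
    (by fun_prop : Measurable fun x : ℝ => x ^ 3 / sin x).aestronglyMeasurable ?_
  refine (ae_restrict_iff' measurableSet_Ioc).2 (Eventually.of_forall fun x hx => ?_)
  have hs := mul_le_sin hx.1.le hx.2
  have hpos : 0 < 2 / π * x := mul_pos (by positivity) hx.1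
  have hsin : 0 < sin x := hpos.trans_le hs
  rw [Real.norm_eq_abs, abs_of_nonneg (div_nonneg (pow_nonneg hx.1.le 3) hsin.le), div_le_iff₀ hsin]
  have hx0 := hx.1
  calc x ^ 3 = x ^ 2 * x := by ring
    _ ≤ (π / 2) ^ 2 * x := by
      have := hx.2
      gcongr
    _ = (π / 2) ^ 3 * (2 / π * x) := by field_simp
    _ ≤ (π / 2) ^ 3 * sin x := by gcongr

/-- The Riemann–Lebesgue lemma in real form on an interval. -/
lemma tendsto_integral_mul_cos_s9 {g : ℝ → ℝ} {a b : ℝ} (hab : a ≤ b)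
    (hg : IntervalIntegrable g volume a b) :
    Tendsto (fun T : ℝ => ∫ x in a..b, g x * cos (T * x)) atTop (𝓝 0) := by
  rw [intervalIntegrable_iff_integrableOn_Ioc_of_le hab] at hg
  set f : ℝ → ℂ := fun x => (((Set.Ioc a b).indicator g x : ℝ) : ℂ) with hf
  have hfi : Integrable f := (hg.integrable_indicator measurableSet_Ioc).ofReal
  -- Mathlib's Fourier character is `exp (2πi ·)`, so the frequency `T` is rescaled by `2π`.
  have hT : Tendsto (fun T : ℝ => T / (2 * π)) atTop (cocompact ℝ) :=
    (tendsto_id.atTop_div_const (by positivity)).mono_right atTop_le_cocompact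
  have h := (Complex.continuous_re.tendsto _).comp
    ((Real.tendsto_integral_exp_smul_cocompact f).comp hT)
  rw [Complex.zero_re] at h
  refine h.congr fun T => ?_
  have hint : Integrable (fun v : ℝ => Real.fourierChar (-(v * (T / (2 * π)))) • f v) := by
    have := (Real.fourierIntegral_convergent_iff (μ := volume) (f := f) (T / (2 * π))).2 hfi
    simpa [mul_comm] using this
  simp only [Function.comp]
  rw [show (∫ v : ℝ, Real.fourierChar (-(v * (T / (2 * π)))) • f v).re
      = ∫ v : ℝ, (Real.fourierChar (-(v * (T / (2 * π)))) • f v).re from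
    (integral_re hint).symm, intervalIntegral.integral_of_le hab,
    ← integral_indicator measurableSet_Ioc]
  congr 1 with v
  have harg : 2 * π * -(v * (T / (2 * π))) = -(T * v) := by field_simp
  rw [Circle.smul_def, Real.fourierChar_apply, harg, smul_eq_mul, hf, Complex.re_mul_ofReal,
    Complex.exp_ofReal_mul_I_re, cos_neg]
  by_cases hv : v ∈ Set.Ioc a b <;> simp [hv, mul_comm]

lemma tendsto_remainder :
    Tendsto (fun N : ℕ => ∫ x in (0 : ℝ)..(π / 2),
      x ^ 3 / sin x * cos ((2 * ((2 * N : ℕ) : ℝ) + 1) * x)) atTop (𝓝 0) := by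
  have hN : Tendsto (fun N : ℕ => 2 * ((2 * N : ℕ) : ℝ) + 1) atTop atTop := by
    refine tendsto_atTop_mono (fun N => ?_) tendsto_natCast_atTop_atTop
    push_cast
    linarith [(Nat.cast_nonneg N : (0 : ℝ) ≤ N)]
  exact (tendsto_integral_mul_cos_s9 pi_div_two_pos.le intervalIntegrable_cube_div_sin).comp hN

lemma integral_cube_mul_sin (k : ℕ) :
    ∫ x in (0 : ℝ)..(π / 2), x ^ 3 * (2 * sin (2 * ((k : ℝ) + 1) * x)) =
      π ^ 3 / 8 * ((-1) ^ k / ((k : ℝ) + 1) ^ 1) -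
        3 * π / 4 * ((-1) ^ k / ((k : ℝ) + 1) ^ 3) := by
  have hk : (k : ℝ) + 1 ≠ 0 := by positivity
  set m : ℝ := 2 * ((k : ℝ) + 1) with hm
  have hm0 : m ≠ 0 := by positivity
  -- The antiderivative comes from integrating by parts three times.
  have hderiv : ∀ x ∈ Set.uIcc (0 : ℝ) (π / 2), HasDerivAt (fun x : ℝ =>
      2 * (-(x ^ 3 * cos (m * x)) / m + 3 * (x ^ 2 * sin (m * x)) / m ^ 2
        + 6 * (x * cos (m * x)) / m ^ 3 - 6 * sin (m * x) / m ^ 4))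
      (x ^ 3 * (2 * sin (m * x))) x := by
    intro x _
    have hmx : HasDerivAt (fun x : ℝ => m * x) m x := by
      simpa using (hasDerivAt_id x).const_mul m
    have hc := hmx.cos
    have hs := hmx.sin
    have h := (((((((hasDerivAt_pow 3 x).mul hc).neg.div_const m).add
      ((((hasDerivAt_pow 2 x).mul hs).const_mul 3).div_const (m ^ 2))).add
      ((((hasDerivAt_id x).mul hc).const_mul 6).div_const (m ^ 3))).sub
      ((hs.const_mul 6).div_const (m ^ 4)))).const_mul 2
    refine h.congr_deriv ?_
    simp only [id]
    field_simp
    push_cast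
    ring
  rw [intervalIntegral.integral_eq_sub_of_hasDerivAt hderiv
    (Continuous.intervalIntegrable (by fun_prop) _ _)]
  have harg : m * (π / 2) = ((k + 1 : ℕ) : ℝ) * π := by rw [hm]; push_cast; ring
  rw [harg, cos_nat_mul_pi, sin_nat_mul_pi, hm]
  simp only [mul_zero, sin_zero]
  field_simp
  ring

/-- Summing over even and odd terms separately: the alternating sum is the full sum minus twice
its even-indexed part. -/
lemma alternating_sum_two_mul (p N : ℕ) :
    ∑ k ∈ Finset.range (2 * N), (-1 : ℝ) ^ k / ((k : ℝ) + 1) ^ p =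
      ∑ k ∈ Finset.range (2 * N), 1 / ((k : ℝ) + 1) ^ p
        - 2 / 2 ^ p * ∑ k ∈ Finset.range N, 1 / ((k : ℝ) + 1) ^ p := by
  induction N with
  | zero => simp
  | succ N ih =>
    rw [show 2 * (N + 1) = 2 * N + 1 + 1 by ring]
    simp only [Finset.sum_range_succ, ih]
    have h1 : (-1 : ℝ) ^ (2 * N) = 1 := by simp
    have h2 : ((2 * N + 1 : ℕ) : ℝ) + 1 = 2 * ((N : ℝ) + 1) := by push_cast; ring
    rw [pow_succ, h1, h2, mul_pow]
    have : (N : ℝ) + 1 ≠ 0 := by positivity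
    field_simp
    ring

lemma tendsto_two_mul_nat : Tendsto (fun N : ℕ => 2 * N) atTop atTop :=
  tendsto_atTop_mono (fun N => by simp only [id]; omega) tendsto_id

/-- `H_{2N} - H_N → log 2`: the Euler–Mascheroni constant cancels. -/
lemma tendsto_alternating_one :
    Tendsto (fun N : ℕ => ∑ k ∈ Finset.range (2 * N), (-1 : ℝ) ^ k / ((k : ℝ) + 1) ^ 1) atTop
      (𝓝 (log 2)) := by
  have h := ((Real.tendsto_harmonic_sub_log.comp tendsto_two_mul_nat).sub
    Real.tendsto_harmonic_sub_log).add_const (log 2)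
  rw [sub_self, zero_add] at h
  refine h.congr' ?_
  filter_upwards [eventually_ne_atTop 0] with N hN
  have hN' : (N : ℝ) ≠ 0 := by exact_mod_cast hN
  rw [alternating_sum_two_mul]
  simp only [Function.comp, harmonic]
  push_cast
  rw [log_mul two_ne_zero hN']
  simp only [pow_one, one_div]
  ring

lemma tendsto_alternating_three :
    Tendsto (fun N : ℕ => ∑ k ∈ Finset.range (2 * N), (-1 : ℝ) ^ k / ((k : ℝ) + 1) ^ 3) atTop
      (𝓝 (3 / 4 * ∑' n : ℕ, 1 / ((n : ℝ) + 1) ^ 3)) := by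
  have hs : Summable (fun n : ℕ => 1 / ((n : ℝ) + 1) ^ 3) := by
    have := (summable_nat_add_iff 1).2 (Real.summable_one_div_nat_pow.2 (by norm_num : 1 < 3))
    simpa using this
  have h := hs.hasSum.tendsto_sum_nat
  have h' := (h.comp tendsto_two_mul_nat).sub (h.const_mul (2 / 2 ^ 3))
  convert h' using 1
  · funext N
    exact alternating_sum_two_mul 3 N
  · congr 1
    ring

lemma integral_eq_sum_add_remainder (n : ℕ) :
    ∫ x in (0 : ℝ)..(π / 2), x ^ 3 * Real.cot x =
      (π ^ 3 / 8 * ∑ k ∈ Finset.range n, (-1 : ℝ) ^ k / ((k : ℝ) + 1) ^ 1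
        - 3 * π / 4 * ∑ k ∈ Finset.range n, (-1 : ℝ) ^ k / ((k : ℝ) + 1) ^ 3)
      + ∫ x in (0 : ℝ)..(π / 2), x ^ 3 / sin x * cos ((2 * (n : ℝ) + 1) * x) := by
  have hpt : ∀ x ∈ Set.uIcc (0 : ℝ) (π / 2), x ^ 3 * Real.cot x =
      (∑ k ∈ Finset.range n, x ^ 3 * (2 * sin (2 * ((k : ℝ) + 1) * x)))
        + x ^ 3 / sin x * cos ((2 * (n : ℝ) + 1) * x) := by
    intro x hx
    rw [Set.uIcc_of_le pi_div_two_pos.le] at hx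
    -- At `x = 0` the factor `x ^ 3` makes both sides vanish, although `sin x = 0` there.
    rcases hx.1.eq_or_lt with rfl | h0
    · simp
    · have hsin : sin x ≠ 0 := (sin_pos_of_pos_of_lt_pi h0 (by linarith [hx.2, pi_pos])).ne'
      rw [← Finset.mul_sum, Real.cot_eq_cos_div_sin, cot_mul_sin_eq x n, add_div,
        mul_div_cancel_left₀ _ hsin]
      ring
  rw [intervalIntegral.integral_congr hpt, intervalIntegral.integral_add,
    intervalIntegral.integral_finsetSum]
  · simp only [integral_cube_mul_sin, Finset.sum_sub_distrib, Finset.mul_sum]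
  · exact fun k _ => Continuous.intervalIntegrable (by fun_prop) _ _
  · exact Continuous.intervalIntegrable (by fun_prop) _ _
  · exact intervalIntegrable_cube_div_sin.mul_continuousOn (by fun_prop)

/-- `∫_0^{π/2} x³ cot x dx = (π³/8) log 2 − (9π/16) ζ(3)`. -/
theorem stmt_9 :
    ∫ x in (0 : ℝ)..(π / 2), x ^ 3 * Real.cot x =
      (π ^ 3 / 8) * Real.log 2 - (9 * π / 16) * ∑' n : ℕ, 1 / ((n : ℝ) + 1) ^ 3 := by
  have h := ((tendsto_alternating_one.const_mul (π ^ 3 / 8)).sub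
    (tendsto_alternating_three.const_mul (3 * π / 4))).add tendsto_remainder
  have hc := h.congr fun N => (integral_eq_sum_add_remainder (2 * N)).symm
  rw [tendsto_nhds_unique tendsto_const_nhds hc]
  ring
end

section
/- For every real u with 0 < u ≤ π/2, ∑_{n=1}^∞ (2 sin u)^{2n} / (n³ C(2n,n)) = 4u² log(2 sin u) + 2 Cl₃(2u) + 4u Cl₂(2u) − 2ζ(3). -/
/-! Both sides are differentiated in `u` on `(0, π/2)`, where each has derivative
`4u² cot u`, and they are compared at the endpoint `u = 0`.

* The left side is `2 ∑ cₘ x^(2m+2) / (m+1)²` at `x = sin u`, with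
  `cₘ = 4^m / ((2m+1) C(2m,m))`. The series `g(x) = ∑ cₘ x^(2m+1)` satisfies
  `(1 - x²) g' = 1 + x g`, which says that `cos u · g(sin u)` has derivative `1`, so it equals `u`.
  Integrating, `∑ cₘ x^(2m+2) / (m+1) = u²` (the series of `arcsin²`), and so the left
  side has derivative `4u² cot u`.
* On the right side the combination `2 Cl₃(2u) + 4u Cl₂(2u)` has derivative `-8u log (2 sin u)`,
  which cancels against the part of `(4u² log (2 sin u))'` other than `4u² cot u`. Formally it is
  `8u ∑ cos(2ku)/k`. As this series converges only conditionally, it is damped by a factor `r^k`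
  with `r < 1`, which turns the cosine sum into `-log |1 - r e^(2iu)|`; letting `r → 1⁻` is
  legitimate because the latter is jointly continuous at `(1, u)`.

Both sides are continuous on `[0, π/2]` and vanish at `0`, the series on the left because the `cₘ`
are bounded, the right side because `2 Cl₃(0) = 2 ζ(3)` and `u² log (2 sin u) → 0`. -/

open Real
open Filter Topology Set

namespace Zucker

/-! ### The series of `arcsin²` -/

lemma summable_aux (p : ℕ) {ρ : ℝ} (h0 : 0 ≤ ρ) (h1 : ρ < 1) :
    Summable fun m : ℕ => (2 * (m : ℝ) + p + 1) * ρ ^ (2 * m + p) := by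
  have hn : ‖ρ‖ < 1 := by rwa [Real.norm_of_nonneg h0]
  have h := (summable_pow_mul_geometric_of_norm_lt_one 1 hn).add
    (summable_pow_mul_geometric_of_norm_lt_one 0 hn)
  have hi : Function.Injective fun m : ℕ => 2 * m + p := fun a b h => by
    simp only at h; omega
  refine (h.comp_injective hi).congr fun m => ?_
  simp only [Function.comp]
  push_cast
  ring

lemma summable_series (a : ℕ → ℝ) (ha : ∀ m, |a m| ≤ 1) (p : ℕ) {x : ℝ} (hx : |x| < 1) :
    Summable fun m : ℕ => a m * x ^ (2 * m + p + 1) := by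
  refine Summable.of_norm_bounded (summable_aux p (abs_nonneg x) hx) fun m => ?_
  rw [norm_mul, norm_pow, Real.norm_eq_abs, Real.norm_eq_abs]
  have h2 : |x| ^ (2 * m + p + 1) ≤ |x| ^ (2 * m + p) :=
    pow_le_pow_of_le_one (abs_nonneg x) hx.le (by omega)
  have h3 : (0 : ℝ) ≤ |x| ^ (2 * m + p) := by positivity
  have h4 : (1 : ℝ) ≤ 2 * (m : ℝ) + p + 1 := by
    have : (0 : ℝ) ≤ 2 * (m : ℝ) + p := by positivity
    linarith
  calc |a m| * |x| ^ (2 * m + p + 1) ≤ 1 * |x| ^ (2 * m + p) := by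
        gcongr
        exact ha m
    _ ≤ _ := by gcongr

lemma summable_deriv (a : ℕ → ℝ) (ha : ∀ m, |a m| ≤ 1) (p : ℕ) {x : ℝ} (hx : |x| < 1) :
    Summable fun m : ℕ => a m * ((2 * (m : ℝ) + p + 1) * x ^ (2 * m + p)) := by
  refine Summable.of_norm_bounded (summable_aux p (abs_nonneg x) hx) fun m => ?_
  have h4 : (0 : ℝ) ≤ 2 * (m : ℝ) + p + 1 := by positivity
  rw [norm_mul, norm_mul, norm_pow, Real.norm_eq_abs, Real.norm_eq_abs, Real.norm_eq_abs,
    abs_of_nonneg h4]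
  calc _ ≤ 1 * ((2 * (m : ℝ) + p + 1) * |x| ^ (2 * m + p)) := by
        gcongr
        exact ha m
    _ = _ := one_mul _

lemma hasDerivAt_series (a : ℕ → ℝ) (ha : ∀ m, |a m| ≤ 1) (p : ℕ) {x : ℝ} (hx : |x| < 1) :
    HasDerivAt (fun y => ∑' m : ℕ, a m * y ^ (2 * m + p + 1))
      (∑' m : ℕ, a m * ((2 * (m : ℝ) + p + 1) * x ^ (2 * m + p))) x := by
  obtain ⟨ρ, h1, h2⟩ := exists_between hx
  have h0 : 0 ≤ ρ := (abs_nonneg x).trans h1.le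
  refine hasDerivAt_tsum_of_isPreconnected (𝕜 := ℝ) (t := Ioo (-ρ) ρ) (y₀ := x) (y := x)
    (g := fun (m : ℕ) y => a m * y ^ (2 * m + p + 1))
    (g' := fun (m : ℕ) y => a m * ((2 * (m : ℝ) + p + 1) * y ^ (2 * m + p))) (summable_aux p h0 h2)
    isOpen_Ioo isPreconnected_Ioo (fun m y _ => ?_) (fun m y hy => ?_) (abs_lt.mp h1)
    (summable_series a ha p hx) (abs_lt.mp h1)
  · have := (hasDerivAt_pow (2 * m + p + 1) y).const_mul (a m)
    simpa using this
  · have h4 : (0 : ℝ) ≤ 2 * (m : ℝ) + p + 1 := by positivity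
    have hy' : |y| ≤ ρ := (abs_lt.mpr hy).le
    rw [norm_mul, norm_mul, norm_pow, Real.norm_eq_abs, Real.norm_eq_abs, Real.norm_eq_abs,
      abs_of_nonneg h4]
    calc _ ≤ 1 * ((2 * (m : ℝ) + p + 1) * ρ ^ (2 * m + p)) := by
          gcongr
          exact ha m
      _ = _ := one_mul _

/-- The coefficient of `x ^ (2m+1)` in `arcsin x / √(1 - x²)`. -/
noncomputable def c (m : ℕ) : ℝ := 4 ^ m / ((2 * (m : ℝ) + 1) * (m.centralBinom : ℝ))

lemma c_pos (m : ℕ) : 0 < c m := by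
  have : (0 : ℝ) < m.centralBinom := by exact_mod_cast Nat.centralBinom_pos m
  unfold c; positivity

lemma c_succ (m : ℕ) : (2 * (m : ℝ) + 3) * c (m + 1) = (2 * (m : ℝ) + 2) * c m := by
  have h0 : (0 : ℝ) < m.centralBinom := by exact_mod_cast Nat.centralBinom_pos m
  have h1 : (0 : ℝ) < (m + 1).centralBinom := by exact_mod_cast Nat.centralBinom_pos (m + 1)
  have h : ((m : ℝ) + 1) * (m + 1).centralBinom = 2 * (2 * m + 1) * m.centralBinom := by
    exact_mod_cast Nat.succ_mul_centralBinom_succ m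
  unfold c
  push_cast
  rw [← mul_div_assoc, ← mul_div_assoc, div_eq_div_iff (by positivity) (by positivity), pow_succ]
  linear_combination (-(2 * (2 * (m : ℝ) + 3) * 4 ^ m)) * h

lemma c_le_one (m : ℕ) : c m ≤ 1 := by
  induction m with
  | zero => simp [c]
  | succ k ih =>
    have := c_succ k
    have hk : (0 : ℝ) ≤ k := k.cast_nonneg
    have := c_pos (k + 1)
    nlinarith

lemma abs_c_div (m j : ℕ) : |c m / ((m : ℝ) + 1) ^ j| ≤ 1 := by
  have h1 : (1 : ℝ) ≤ ((m : ℝ) + 1) ^ j :=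
    one_le_pow₀ (by linarith [(m.cast_nonneg : (0 : ℝ) ≤ m)])
  rw [abs_of_nonneg (div_nonneg (c_pos m).le (by positivity)), div_le_one (by positivity)]
  exact (c_le_one m).trans h1

lemma abs_c (m : ℕ) : |c m| ≤ 1 := by simpa using abs_c_div m 0

/-- The power series `∑ cₘ x^(2m+1)` of `arcsin x / √(1 - x²)`. -/
noncomputable def g (x : ℝ) : ℝ := ∑' m : ℕ, c m * x ^ (2 * m + 0 + 1)

/-- The power series `∑ cₘ x^(2m+2) / (m+1)^j`, equal to `arcsin² x` for `j = 1`; twice its value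
at `j = 2` is the left side of the main identity. -/
noncomputable def P (j : ℕ) (x : ℝ) : ℝ :=
  ∑' m : ℕ, c m / ((m : ℝ) + 1) ^ j * x ^ (2 * m + 1 + 1)

/-- The differential equation `(1 - x²) g' = 1 + x g`. -/
lemma hasDerivAt_g {x : ℝ} (hx : |x| < 1) :
    ∃ d, HasDerivAt g d x ∧ (1 - x ^ 2) * d = 1 + x * g x := by
  refine ⟨_, hasDerivAt_series c abs_c 0 hx, ?_⟩
  set d := ∑' m : ℕ, c m * ((2 * (m : ℝ) + (0 : ℕ) + 1) * x ^ (2 * m + 0)) with hd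
  have hs := summable_deriv c abs_c 0 hx
  have hg := summable_series c abs_c 0 hx
  have h1 : d = 1 + ∑' m : ℕ, (x ^ 2 * (c m * ((2 * (m : ℝ) + (0 : ℕ) + 1) * x ^ (2 * m + 0)))
      + x * (c m * x ^ (2 * m + 0 + 1))) := by
    rw [hd, hs.tsum_eq_zero_add]
    congr 1
    · simp [c]
    · refine tsum_congr fun m => ?_
      have := c_succ m
      push_cast
      linear_combination x ^ (2 * m + 2) * this
  rw [(hs.mul_left _).tsum_add (hg.mul_left _), tsum_mul_left, tsum_mul_left, ← hd] at h1
  unfold g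
  linear_combination h1

lemma hasDerivAt_P_one {x : ℝ} (hx : |x| < 1) : HasDerivAt (P 1) (2 * g x) x := by
  convert! hasDerivAt_series (fun m => c m / ((m : ℝ) + 1) ^ 1) (fun m => abs_c_div m 1) 1 hx
    using 1
  unfold g
  rw [← tsum_mul_left]
  refine tsum_congr fun m => ?_
  have : (m : ℝ) + 1 ≠ 0 := by positivity
  push_cast
  field_simp
  ring

lemma hasDerivAt_P_two {x : ℝ} (hx : |x| < 1) :
    ∃ d, HasDerivAt (P 2) d x ∧ x * d = 2 * P 1 x := by
  refine ⟨_, hasDerivAt_series (fun m => c m / ((m : ℝ) + 1) ^ 2) (fun m => abs_c_div m 2) 1 hx, ?_⟩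
  unfold P
  rw [← tsum_mul_left, ← tsum_mul_left]
  refine tsum_congr fun m => ?_
  have : (m : ℝ) + 1 ≠ 0 := by positivity
  push_cast
  field_simp
  ring

lemma abs_sin_lt {u : ℝ} (h0 : 0 ≤ u) (h1 : u < π / 2) : |sin u| < 1 := by
  have hp := pi_pos
  have hc : 0 < cos u := cos_pos_of_mem_Ioo ⟨by linarith, h1⟩
  rw [← sq_lt_one_iff_abs_lt_one]
  nlinarith [sin_sq_add_cos_sq u]

lemma cos_mul_g {u : ℝ} (h0 : 0 ≤ u) (h1 : u < π / 2) : cos u * g (sin u) = u := by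
  have hd : ∀ t, 0 ≤ t → t < π / 2 →
      HasDerivAt (fun t => cos t * g (sin t) - t) 0 t := by
    intro t ht0 ht1
    obtain ⟨d, hd, he⟩ := hasDerivAt_g (abs_sin_lt ht0 ht1)
    convert! ((hasDerivAt_cos t).mul (hd.comp t (hasDerivAt_sin t))).sub (hasDerivAt_id t) using 1
    simp only [Function.comp]
    linear_combination (-1 : ℝ) * he - d * sin_sq_add_cos_sq t
  have := constant_of_has_deriv_right_zero (a := 0) (b := u)
    (fun t ht => (hd t ht.1 (ht.2.trans_lt h1)).continuousAt.continuousWithinAt)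
    (fun t ht => (hd t ht.1 (ht.2.trans h1)).hasDerivWithinAt) u ⟨h0, le_rfl⟩
  simp [g] at this
  unfold g
  linarith

lemma P_one_sin {u : ℝ} (h0 : 0 ≤ u) (h1 : u < π / 2) : P 1 (sin u) = u ^ 2 := by
  have hd : ∀ t, 0 ≤ t → t < π / 2 →
      HasDerivAt (fun t => P 1 (sin t) - t ^ 2) 0 t := by
    intro t ht0 ht1
    convert! ((hasDerivAt_P_one (abs_sin_lt ht0 ht1)).comp t (hasDerivAt_sin t)).sub
      (hasDerivAt_pow 2 t) using 1
    have := cos_mul_g ht0 ht1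
    push_cast
    linear_combination (-2 : ℝ) * this
  have := constant_of_has_deriv_right_zero (a := 0) (b := u)
    (fun t ht => (hd t ht.1 (ht.2.trans_lt h1)).continuousAt.continuousWithinAt)
    (fun t ht => (hd t ht.1 (ht.2.trans h1)).hasDerivWithinAt) u ⟨h0, le_rfl⟩
  simp [P] at this
  unfold P
  simp only [pow_one]
  linarith

lemma hasDerivAt_P_two_sin {u : ℝ} (h0 : 0 < u) (h1 : u < π / 2) :
    HasDerivAt (fun t => P 2 (sin t)) (2 * u ^ 2 * (cos u / sin u)) u := by
  obtain ⟨d, hd, he⟩ := hasDerivAt_P_two (abs_sin_lt h0.le h1)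
  have hs : 0 < sin u := sin_pos_of_pos_of_lt_pi h0 (by linarith [pi_pos])
  convert! hd.comp u (hasDerivAt_sin u) using 1
  rw [P_one_sin h0.le h1] at he
  field_simp
  linear_combination (-cos u) * he

lemma summable_inv_sq : Summable fun k : ℕ => 1 / ((k : ℝ) + 1) ^ 2 := by
  have := (summable_nat_add_iff 1).mpr (Real.summable_one_div_nat_pow.mpr (one_lt_two))
  simpa using this

lemma continuous_P_two_sin : Continuous fun t => P 2 (sin t) := by
  unfold P
  refine continuous_tsum (fun m => by fun_prop) summable_inv_sq fun m t => ?_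
  rw [norm_mul, norm_pow, norm_div, Real.norm_of_nonneg (c_pos m).le, norm_pow,
    Real.norm_of_nonneg (by positivity : (0 : ℝ) ≤ (m : ℝ) + 1)]
  calc _ ≤ 1 / ((m : ℝ) + 1) ^ 2 * 1 ^ (2 * m + 1 + 1) := by
        gcongr
        · exact c_le_one m
        · exact abs_sin_le_one t
    _ = _ := by simp

lemma lhs_term (s : ℝ) (n : ℕ) :
    (2 * s) ^ (2 * (n + 1)) / (((n : ℝ) + 1) ^ 3 * ((2 * (n + 1)).choose (n + 1) : ℝ)) =
      2 * (c n / ((n : ℝ) + 1) ^ 2 * s ^ (2 * n + 1 + 1)) := by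
  rw [← Nat.centralBinom_eq_two_mul_choose]
  have h0 : (0 : ℝ) < n.centralBinom := by exact_mod_cast Nat.centralBinom_pos n
  have h1 : (0 : ℝ) < (n + 1).centralBinom := by exact_mod_cast Nat.centralBinom_pos (n + 1)
  have h : ((n : ℝ) + 1) * (n + 1).centralBinom = 2 * (2 * n + 1) * n.centralBinom := by
    exact_mod_cast Nat.succ_mul_centralBinom_succ n
  have e : (2 * s) ^ (2 * (n + 1)) = 4 * 4 ^ n * s ^ (2 * n + 1 + 1) := by
    rw [mul_pow, pow_mul]
    norm_num
    ring
  have e2 : ((n : ℝ) + 1) ^ 3 * (n + 1).centralBinom =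
      ((n : ℝ) + 1) ^ 2 * (2 * (2 * n + 1) * n.centralBinom) := by
    rw [← h]; ring
  rw [e, e2]
  unfold c
  field_simp
  ring

/-! ### The Clausen functions -/

/-- The damped series `∑ r^k (2 cos(2ku)/k³ + 4u sin(2ku)/k²)`, indexed by `k + 1`; at `r = 1` it
is `2 Cl₃(2u) + 4u Cl₂(2u)`. -/
noncomputable def F (r u : ℝ) : ℝ :=
  ∑' k : ℕ, r ^ (k + 1) * (2 * (cos (((k : ℝ) + 1) * (2 * u)) / ((k : ℝ) + 1) ^ 3) +
    4 * u * (sin (((k : ℝ) + 1) * (2 * u)) / ((k : ℝ) + 1) ^ 2))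

lemma F_term_bound {r : ℝ} (h0 : 0 ≤ r) (h1 : r ≤ 1) (u : ℝ) (k : ℕ) :
    ‖r ^ (k + 1) * (2 * (cos (((k : ℝ) + 1) * (2 * u)) / ((k : ℝ) + 1) ^ 3) +
      4 * u * (sin (((k : ℝ) + 1) * (2 * u)) / ((k : ℝ) + 1) ^ 2))‖ ≤
      (2 + 4 * |u|) * (1 / ((k : ℝ) + 1) ^ 2) := by
  have hk : (1 : ℝ) ≤ (k : ℝ) + 1 := by linarith [(k.cast_nonneg : (0 : ℝ) ≤ k)]
  have hk0 : (0 : ℝ) < (k : ℝ) + 1 := by linarith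
  have e1 : |cos (((k : ℝ) + 1) * (2 * u)) / ((k : ℝ) + 1) ^ 3| ≤ 1 / ((k : ℝ) + 1) ^ 2 := by
    rw [abs_div, abs_of_pos (by positivity : (0 : ℝ) < ((k : ℝ) + 1) ^ 3)]
    have : ((k : ℝ) + 1) ^ 2 ≤ ((k : ℝ) + 1) ^ 3 := pow_le_pow_right₀ hk (by norm_num)
    gcongr
    exact abs_cos_le_one _
  have e2 : |sin (((k : ℝ) + 1) * (2 * u)) / ((k : ℝ) + 1) ^ 2| ≤ 1 / ((k : ℝ) + 1) ^ 2 := by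
    rw [abs_div, abs_of_pos (by positivity : (0 : ℝ) < ((k : ℝ) + 1) ^ 2)]
    gcongr
    exact abs_sin_le_one _
  rw [norm_mul, norm_pow, Real.norm_of_nonneg h0]
  calc _ ≤ 1 * (2 * (1 / ((k : ℝ) + 1) ^ 2) + 4 * |u| * (1 / ((k : ℝ) + 1) ^ 2)) := by
        gcongr
        · exact pow_le_one₀ h0 h1
        · refine (norm_add_le _ _).trans ?_
          rw [Real.norm_eq_abs, Real.norm_eq_abs, abs_mul, abs_mul (4 * u), abs_mul 4 u, abs_two,
            abs_of_pos (by norm_num : (0 : ℝ) < 4)]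
          gcongr
    _ = _ := by ring

lemma hasSum_cos_log {r : ℝ} (h0 : 0 ≤ r) (h1 : r < 1) (t : ℝ) :
    HasSum (fun k : ℕ => r ^ (k + 1) * (cos (((k : ℝ) + 1) * t) / ((k : ℝ) + 1)))
      (-(Real.log (1 - 2 * r * cos t + r ^ 2) / 2)) := by
  set z : ℂ := (r : ℂ) * Complex.exp ((t : ℂ) * Complex.I) with hz
  have hn : ‖z‖ < 1 := by
    rw [hz, norm_mul, Complex.norm_exp_ofReal_mul_I, Complex.norm_real, Real.norm_of_nonneg h0]
    simpa using h1
  have h := Complex.hasSum_re (Complex.hasSum_taylorSeries_neg_log' hn)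
  convert! h using 1
  · funext k
    have e : z ^ (k + 1) / ((k : ℂ) + 1) = ((r ^ (k + 1) / ((k : ℝ) + 1) : ℝ) : ℂ) *
        Complex.exp (((((k : ℝ) + 1) * t : ℝ) : ℂ) * Complex.I) := by
      rw [hz, mul_pow, ← Complex.exp_nat_mul]
      push_cast
      ring_nf
    rw [e, Complex.re_ofReal_mul, Complex.exp_ofReal_mul_I_re]
    ring
  · rw [Complex.neg_re, Complex.log_re]
    have e : 1 - 2 * r * cos t + r ^ 2 = ‖1 - z‖ ^ 2 := by
      rw [← Complex.normSq_eq_norm_sq, Complex.normSq_apply, hz]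
      simp only [Complex.sub_re, Complex.sub_im, Complex.one_re, Complex.one_im,
        Complex.re_ofReal_mul, Complex.im_ofReal_mul, Complex.exp_ofReal_mul_I_re,
        Complex.exp_ofReal_mul_I_im]
      linear_combination (-r ^ 2) * sin_sq_add_cos_sq t
    rw [e, Real.log_pow]
    push_cast
    ring

lemma hasDerivAt_F {r : ℝ} (h0 : 0 ≤ r) (h1 : r < 1) (u : ℝ) :
    HasDerivAt (F r) (-4 * u * Real.log (1 - 2 * r * cos (2 * u) + r ^ 2)) u := by
  have hb : Summable fun k : ℕ => 8 * (|u| + 1) * r ^ (k + 1) := by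
    refine Summable.mul_left _ ?_
    exact (summable_nat_add_iff 1).mpr (summable_geometric_of_lt_one h0 h1)
  have hu : u ∈ Ioo (u - 1) (u + 1) := ⟨by linarith, by linarith⟩
  have h := hasDerivAt_tsum_of_isPreconnected (𝕜 := ℝ) (t := Ioo (u - 1) (u + 1)) (y₀ := u) (y := u)
    (g := fun (k : ℕ) u => r ^ (k + 1) * (2 * (cos (((k : ℝ) + 1) * (2 * u)) / ((k : ℝ) + 1) ^ 3) +
      4 * u * (sin (((k : ℝ) + 1) * (2 * u)) / ((k : ℝ) + 1) ^ 2)))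
    (g' := fun (k : ℕ) u => 8 * u * (r ^ (k + 1) * (cos (((k : ℝ) + 1) * (2 * u)) / ((k : ℝ) + 1))))
    hb isOpen_Ioo isPreconnected_Ioo ?_ ?_ hu ?_ hu
  · convert! h using 1
    rw [((hasSum_cos_log h0 h1 (2 * u)).mul_left (8 * u)).tsum_eq]
    ring
  · intro k y _
    have hk : (k : ℝ) + 1 ≠ 0 := by positivity
    have hl : HasDerivAt (fun u : ℝ => ((k : ℝ) + 1) * (2 * u)) (((k : ℝ) + 1) * 2) y := by
      simpa using ((hasDerivAt_id y).const_mul 2).const_mul ((k : ℝ) + 1)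
    have hl4 : HasDerivAt (fun u : ℝ => 4 * u) 4 y := by
      simpa using (hasDerivAt_id y).const_mul 4
    convert! (((hl.cos.div_const (((k : ℝ) + 1) ^ 3)).const_mul 2).add
      (hl4.mul (hl.sin.div_const (((k : ℝ) + 1) ^ 2)))).const_mul (r ^ (k + 1)) using 1
    field_simp
    ring
  · intro k y hy
    have hk : (1 : ℝ) ≤ (k : ℝ) + 1 := by linarith [(k.cast_nonneg : (0 : ℝ) ≤ k)]
    have hk0 : (0 : ℝ) < (k : ℝ) + 1 := by linarith
    have hy' : |y| ≤ |u| + 1 := by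
      have : |y - u| < 1 := abs_lt.mpr ⟨by linarith [hy.1], by linarith [hy.2]⟩
      have := abs_sub_abs_le_abs_sub y u
      linarith
    have e1 : |cos (((k : ℝ) + 1) * (2 * y)) / ((k : ℝ) + 1)| ≤ 1 := by
      rw [abs_div, abs_of_pos hk0, div_le_one hk0]
      exact (abs_cos_le_one _).trans hk
    rw [norm_mul, norm_mul, norm_mul, norm_pow, Real.norm_of_nonneg h0, Real.norm_eq_abs,
      Real.norm_eq_abs, Real.norm_eq_abs, abs_of_pos (by norm_num : (0 : ℝ) < 8)]
    calc _ ≤ 8 * (|u| + 1) * (r ^ (k + 1) * 1) := by gcongr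
      _ = _ := by ring
  · exact Summable.of_norm_bounded (summable_inv_sq.mul_left _) (F_term_bound h0 h1.le u)

lemma tendsto_F (u : ℝ) : Tendsto (fun r => F r u) (𝓝[<] 1) (𝓝 (F 1 u)) := by
  have hr : ∀ᶠ r : ℝ in 𝓝[<] 1, r ∈ Ioo (0 : ℝ) 1 := Ioo_mem_nhdsLT one_pos
  refine tendsto_tsum_of_dominated_convergence
    (bound := fun k : ℕ => (2 + 4 * |u|) * (1 / ((k : ℝ) + 1) ^ 2))
    (summable_inv_sq.mul_left _) (fun k => ?_) ?_
  · refine Tendsto.mono_left ?_ nhdsWithin_le_nhds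
    exact Continuous.tendsto (by fun_prop) 1
  · filter_upwards [hr] with r hr k
    exact F_term_bound hr.1.le hr.2.le u k

/-- `2 Cl₃(2u) + 4u Cl₂(2u)` has derivative `-8u log (2 sin u)`. -/
lemma hasDerivAt_F_one {u : ℝ} (h0 : 0 < u) (h1 : u < π) :
    HasDerivAt (F 1) (-8 * u * Real.log (2 * sin u)) u := by
  have hs : 0 < sin u := sin_pos_of_pos_of_lt_pi h0 h1
  have hr : ∀ᶠ r : ℝ in 𝓝[<] 1, r ∈ Ioo (0 : ℝ) 1 := Ioo_mem_nhdsLT one_pos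
  have hval : 1 - 2 * 1 * cos (2 * u) + (1 : ℝ) ^ 2 = (2 * sin u) ^ 2 := by
    rw [cos_two_mul]
    linear_combination (-4 : ℝ) * sin_sq_add_cos_sq u
  let L : ℝ × ℝ → ℝ := fun q => -4 * q.2 * Real.log (1 - 2 * q.1 * cos (2 * q.2) + q.1 ^ 2)
  have hL : ContinuousAt L (1, u) := by
    refine ContinuousAt.mul (by fun_prop) (ContinuousAt.log (by fun_prop) ?_)
    change 1 - 2 * 1 * cos (2 * u) + (1 : ℝ) ^ 2 ≠ 0
    rw [hval]
    positivity
  have key : HasDerivAt (F 1) (L (1, u)) u := by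
    refine hasDerivAt_of_tendstoUniformlyOnFilter (l := 𝓝[<] (1 : ℝ)) (f := F)
      (f' := fun r y => L (r, y)) (g' := fun y => L (1, y)) ?_ ?_
      (Eventually.of_forall tendsto_F)
    · -- Joint continuity at `(1, u)` upgrades pointwise to locally uniform convergence.
      rw [tendstoUniformlyOnFilter_iff_tendsto]
      have a1 : Tendsto (fun q : ℝ × ℝ => (q.1, q.2)) (𝓝[<] (1 : ℝ) ×ˢ 𝓝 u) (𝓝 (1, u)) := by
        rw [nhds_prod_eq]
        exact Filter.prod_mono nhdsWithin_le_nhds le_rfl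
      have a2 : Tendsto (fun q : ℝ × ℝ => ((1 : ℝ), q.2)) (𝓝[<] (1 : ℝ) ×ˢ 𝓝 u) (𝓝 (1, u)) :=
        tendsto_const_nhds.prodMk_nhds tendsto_snd
      exact ((hL.tendsto.comp a2).prodMk_nhds (hL.tendsto.comp a1)).mono_right
        (nhds_le_uniformity _)
    · filter_upwards [hr.prod_inl (𝓝 u)] with q hq
      exact hasDerivAt_F hq.1.le hq.2 q.2
  convert! key using 1
  simp only [L, hval, Real.log_pow]
  push_cast
  ring

lemma continuousOn_F_one : ContinuousOn (F 1) (Icc 0 (π / 2)) := by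
  unfold F
  refine continuousOn_tsum (fun k => by fun_prop)
    (summable_inv_sq.mul_left (2 + 4 * (π / 2))) fun k u hu => ?_
  refine (F_term_bound zero_le_one le_rfl u k).trans ?_
  rw [abs_of_nonneg hu.1]
  have := hu.2
  gcongr

lemma F_one_eq (u : ℝ) : F 1 u =
    2 * (∑' k : ℕ, Real.cos (((k : ℝ) + 1) * (2 * u)) / ((k : ℝ) + 1) ^ 3) +
      4 * u * (∑' k : ℕ, Real.sin (((k : ℝ) + 1) * (2 * u)) / ((k : ℝ) + 1) ^ 2) := by
  have s1 : Summable fun k : ℕ => cos (((k : ℝ) + 1) * (2 * u)) / ((k : ℝ) + 1) ^ 3 := by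
    refine Summable.of_norm_bounded summable_inv_sq fun k => ?_
    have hk : (1 : ℝ) ≤ (k : ℝ) + 1 := by linarith [(k.cast_nonneg : (0 : ℝ) ≤ k)]
    rw [norm_div, Real.norm_eq_abs, Real.norm_of_nonneg (by positivity)]
    have : ((k : ℝ) + 1) ^ 2 ≤ ((k : ℝ) + 1) ^ 3 := pow_le_pow_right₀ hk (by norm_num)
    gcongr
    exact abs_cos_le_one _
  have s2 : Summable fun k : ℕ => sin (((k : ℝ) + 1) * (2 * u)) / ((k : ℝ) + 1) ^ 2 := by
    refine Summable.of_norm_bounded summable_inv_sq fun k => ?_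
    rw [norm_div, Real.norm_eq_abs, Real.norm_of_nonneg (by positivity)]
    gcongr
    exact abs_sin_le_one _
  unfold F
  rw [← tsum_mul_left, ← tsum_mul_left, ← (s1.mul_left 2).tsum_add (s2.mul_left (4 * u))]
  simp

/-! ### Comparison -/

/-- At `0` the factor `u²` absorbs the logarithmic singularity. -/
lemma continuousOn_sq_log : ContinuousOn (fun u => u ^ 2 * Real.log (2 * sin u))
    (Icc 0 (π / 2)) := by
  have hp := pi_pos
  have hsinc : ∀ u ∈ Icc 0 (π / 2), 0 < sinc u := by
    intro u hu
    rcases hu.1.eq_or_lt with h | h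
    · simp [← h]
    · rw [sinc_of_ne_zero h.ne']
      exact div_pos (sin_pos_of_pos_of_lt_pi h (by linarith [hu.2])) h
  have h : ContinuousOn (fun u => u * (u * Real.log u) + u ^ 2 * Real.log (2 * sinc u))
      (Icc 0 (π / 2)) := by
    refine ContinuousOn.add ?_ ?_
    · exact (continuous_id.mul Real.continuous_mul_log).continuousOn
    · refine ContinuousOn.mul (by fun_prop) (ContinuousOn.log ?_ ?_)
      · exact (continuous_const.mul continuous_sinc).continuousOn
      · intro u hu
        have := hsinc u hu
        positivity
  refine h.congr fun u hu => ?_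
  rcases hu.1.eq_or_lt with h | h
  · simp [← h]
  · have := hsinc u hu
    have e : 2 * sin u = u * (2 * sinc u) := by
      rw [sinc_of_ne_zero h.ne']
      field_simp
    simp only
    rw [e, Real.log_mul h.ne' (by positivity)]
    ring

lemma main_eq {u : ℝ} (h0 : 0 < u) (h1 : u ≤ π / 2) :
    2 * P 2 (sin u) - 4 * (u ^ 2 * Real.log (2 * sin u)) - F 1 u = -F 1 0 := by
  have hp := pi_pos
  have hsub : Icc 0 u ⊆ Icc 0 (π / 2) := Icc_subset_Icc_right h1
  obtain ⟨t, ht, he⟩ := exists_hasDerivAt_eq_slope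
    (fun u => 2 * P 2 (sin u) - 4 * (u ^ 2 * Real.log (2 * sin u)) - F 1 u) (fun _ => 0) h0
    (((continuous_const.mul continuous_P_two_sin).continuousOn.sub
      (continuousOn_const.mul (continuousOn_sq_log.mono hsub))).sub
      (continuousOn_F_one.mono hsub)) (by
      intro t ht
      have ht1 : t < π / 2 := ht.2.trans_le h1
      have hs : 0 < sin t := sin_pos_of_pos_of_lt_pi ht.1 (by linarith)
      have hlog := ((hasDerivAt_sin t).const_mul 2).log (by positivity)
      convert! (((hasDerivAt_P_two_sin ht.1 ht1).const_mul 2).sub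
        (((hasDerivAt_pow 2 t).mul hlog).const_mul 4)).sub
        (hasDerivAt_F_one ht.1 (by linarith)) using 1
      push_cast
      field_simp
      ring)
  rw [eq_div_iff (by linarith)] at he
  have hP : P 2 (sin 0) = 0 := by simp [P]
  simp only [hP] at he
  linarith

end Zucker

/-- For `0 < u ≤ π/2`,
`∑_{n=1}^∞ (2 sin u)^{2n}/(n³ C(2n,n))
  = 4u² log(2 sin u) + 2 Cl₃(2u) + 4u Cl₂(2u) − 2ζ(3)`,
where `Cl₂(θ) = ∑_{k=1}^∞ sin(kθ)/k²` and `Cl₃(θ) = ∑_{k=1}^∞ cos(kθ)/k³`. -/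
theorem stmt_12 (u : ℝ) (h0 : 0 < u) (h1 : u ≤ π / 2) :
    ∑' n : ℕ, (2 * Real.sin u) ^ (2 * (n + 1)) /
        (((n : ℝ) + 1) ^ 3 * ((2 * (n + 1)).choose (n + 1) : ℝ)) =
      4 * u ^ 2 * Real.log (2 * Real.sin u) +
        2 * (∑' k : ℕ, Real.cos (((k : ℝ) + 1) * (2 * u)) / ((k : ℝ) + 1) ^ 3) +
        4 * u * (∑' k : ℕ, Real.sin (((k : ℝ) + 1) * (2 * u)) / ((k : ℝ) + 1) ^ 2) -
        2 * ∑' n : ℕ, 1 / ((n : ℝ) + 1) ^ 3 := by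
  have h := Zucker.main_eq h0 h1
  have hL : ∑' n : ℕ, (2 * Real.sin u) ^ (2 * (n + 1)) /
      (((n : ℝ) + 1) ^ 3 * ((2 * (n + 1)).choose (n + 1) : ℝ)) = 2 * Zucker.P 2 (Real.sin u) := by
    unfold Zucker.P
    rw [← tsum_mul_left]
    exact tsum_congr fun n => Zucker.lhs_term _ n
  have hF := Zucker.F_one_eq u
  have hF0 := Zucker.F_one_eq 0
  simp only [mul_zero, Real.cos_zero, zero_mul, add_zero] at hF0
  rw [hL]
  linear_combination h + hF - hF0
end

section
/- ∑_{n=1}^∞ 1/(n³ C(2n,n)) = π√3 · ∑_{n=0}^∞ 1/(3n+1)² − (4/3) ζ(3) − (2√3/27) π³. -/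
/-!
Both sides are equal to the log-sine integral `-8 ∫₀^{π/6} t log (2 sin t) dt`.

*Binomial side.* Iterating the reduction formula for `∫ sin^{2N}` gives, for `0 ≤ t ≤ π/6`,
`t = ∑_{n ≥ 1} (2 sin t)^{2n-1} cos t / (n C(2n,n))` (`hasSum_arcTerm`). Multiplying by
`log (2 sin t)` and integrating term by term with the substitution `u = 2 sin t ∈ [0, 1]`, where
`∫₀¹ u^{2n-1} log u du = -1/(4n²)`, produces the series of `1/(n³ C(2n,n))`
(`hasSum_integral_form`).

*Fourier side.* Formally `log (2 sin t) = -∑ cos(2kt)/k`. To integrate this conditionally convergent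
series against `t`, it is regularised by `log |1 - r e^{2it}| = -∑ r^k cos(2kt)/k` for `r < 1`, and
`r → 1⁻` is taken by dominated convergence in both the integral and the series
(`tsum_clausenTerm`). The result is
`(2π/3) ∑ sin(kπ/3)/k² + 2 ∑ (cos(kπ/3) - 1)/k³`. Since the coefficients are periodic modulo 6,
splitting into residue classes expresses this through `∑ 1/(3n+1)²`, `ζ(2) = π²/6` and `ζ(3)`
(`tsum_clausenTerm_eq`).
-/

open Real

/-! ### The binomial series as a log-sine integral -/

lemma two_pow_le_centralBinom (n : ℕ) : 2 ^ n ≤ n.centralBinom := by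
  induction n with
  | zero => simp
  | succ n ih =>
    have h := Nat.succ_mul_centralBinom_succ n
    rw [pow_succ]
    refine Nat.le_of_mul_le_mul_left (c := n + 1) ?_ (Nat.succ_pos n)
    rw [h]
    nlinarith

/-- The term of index `n + 1` in the expansion
`t = ∑_{n ≥ 1} (2 sin t)^{2n-1} cos t / (n C(2n,n))`. -/
noncomputable def arcTerm (n : ℕ) (t : ℝ) : ℝ :=
  (2 * sin t) ^ (2 * n + 1) * cos t / (((n : ℝ) + 1) * (n + 1).centralBinom)

lemma sin_bounds {t : ℝ} (h0 : 0 ≤ t) (h1 : t ≤ π / 6) :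
    0 ≤ sin t ∧ sin t ≤ 1 / 2 := by
  have hpi := pi_pos
  refine ⟨sin_nonneg_of_nonneg_of_le_pi h0 (by linarith), ?_⟩
  rw [← sin_pi_div_six]
  exact sin_le_sin_of_le_of_le_pi_div_two (by linarith) (by linarith) h1

lemma cb_pos (n : ℕ) : (0 : ℝ) < n.centralBinom := by
  exact_mod_cast Nat.centralBinom_pos n

lemma cb_ge (n : ℕ) : (2 : ℝ) ^ n ≤ n.centralBinom := by
  exact_mod_cast two_pow_le_centralBinom n

/-- The expansion of `t` with exact remainder: each step applies the reduction formula expressing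
`∫ sin^{2N+2}` through `∫ sin^{2N}`. -/
lemma sum_arcTerm_add_remainder (t : ℝ) (N : ℕ) :
    ∑ n ∈ Finset.range N, arcTerm n t +
      4 ^ N / (N.centralBinom : ℝ) * ∫ x in (0 : ℝ)..t, sin x ^ (2 * N) = t := by
  induction N with
  | zero => simp
  | succ N ih =>
    refine Eq.trans ?_ ih
    rw [Finset.sum_range_succ, add_assoc]
    congr 1
    have h : ((N : ℝ) + 1) * (N + 1).centralBinom = 2 * (2 * N + 1) * N.centralBinom := by
      exact_mod_cast Nat.succ_mul_centralBinom_succ N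
    rw [show 2 * (N + 1) = 2 * N + 2 by ring, integral_sin_pow, arcTerm]
    have h1 := cb_pos N
    have h2 : ((N + 1).centralBinom : ℝ) = 2 * (2 * N + 1) * N.centralBinom / (N + 1) := by
      field_simp; linarith
    have h4 : (2 : ℝ) ^ (2 * N + 1) = 2 * 4 ^ N := by
      rw [pow_succ, pow_mul]; norm_num; ring
    rw [h2, mul_pow, h4]
    push_cast
    simp only [sin_zero]
    field_simp
    ring

/-- The remainder is at most `t / 2^N`, because `sin² ≤ 1/4` on `[0, π/6]` and
`2^N ≤ C(2N,N)`. -/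
lemma hasSum_arcTerm {t : ℝ} (h0 : 0 ≤ t) (h1 : t ≤ π / 6) :
    HasSum (fun n => arcTerm n t) t := by
  have hpi := pi_pos
  obtain ⟨hs0, hs1⟩ := sin_bounds h0 h1
  have hc : 0 ≤ cos t := cos_nonneg_of_neg_pi_div_two_le_of_le (by linarith) (by linarith)
  rw [hasSum_iff_tendsto_nat_of_nonneg (fun n => by unfold arcTerm; positivity)]
  have hrem : Filter.Tendsto (fun N : ℕ => 4 ^ N / (N.centralBinom : ℝ) *
      ∫ x in (0 : ℝ)..t, sin x ^ (2 * N)) Filter.atTop (nhds 0) := by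
    have hlim : Filter.Tendsto (fun N : ℕ => t * (1 / 2 : ℝ) ^ N) Filter.atTop (nhds 0) := by
      simpa using (tendsto_pow_atTop_nhds_zero_of_lt_one (by norm_num : (0 : ℝ) ≤ 1 / 2)
        (by norm_num)).const_mul t
    refine squeeze_zero (fun N => ?_) (fun N => ?_) hlim
    · refine mul_nonneg (by positivity) (intervalIntegral.integral_nonneg h0 fun x _ => ?_)
      rw [pow_mul]; positivity
    · have hint : ∫ x in (0 : ℝ)..t, sin x ^ (2 * N) ≤ ∫ x in (0 : ℝ)..t, (1 / 4 : ℝ) ^ N := by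
        refine intervalIntegral.integral_mono_on h0 (Continuous.intervalIntegrable (by fun_prop) _ _)
          (by simp) fun x hx => ?_
        obtain ⟨a, b⟩ := sin_bounds hx.1 (hx.2.trans h1)
        rw [pow_mul]
        gcongr
        nlinarith
      have hint' : ∫ x in (0 : ℝ)..t, (1 / 4 : ℝ) ^ N = t * (1 / 4) ^ N := by simp
      rw [hint'] at hint
      calc 4 ^ N / (N.centralBinom : ℝ) * ∫ x in (0 : ℝ)..t, sin x ^ (2 * N)
          ≤ 4 ^ N / (2 : ℝ) ^ N * (t * (1 / 4) ^ N) := by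
            have h0 : 0 ≤ ∫ x in (0 : ℝ)..t, sin x ^ (2 * N) :=
              intervalIntegral.integral_nonneg h0 fun x _ => by rw [pow_mul]; positivity
            gcongr
            exact cb_ge N
        _ = t * (1 / 2) ^ N := by
            rw [show (4 : ℝ) = 2 * 2 by norm_num]; simp only [mul_pow, div_pow]; field_simp
  have := (tendsto_const_nhds (x := t)).sub hrem
  rw [sub_zero] at this
  refine this.congr fun N => ?_
  linarith [sum_arcTerm_add_remainder t N]

/-- One factor `u = 2 sin t` of `arcTerm` absorbs the singularity of `log u`, since `u log u` is
continuous on `ℝ`. -/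
lemma continuous_arcTerm_mul_log (n : ℕ) :
    Continuous fun t => arcTerm n t * log (2 * sin t) := by
  have h : (fun t => arcTerm n t * log (2 * sin t)) = fun t =>
      (2 * sin t) ^ (2 * n) * cos t / (((n : ℝ) + 1) * (n + 1).centralBinom) *
        ((2 * sin t) * log (2 * sin t)) := by
    ext t; unfold arcTerm; ring
  rw [h]
  have := Real.continuous_mul_log.comp (show Continuous fun t : ℝ => 2 * sin t by fun_prop)
  exact (by fun_prop : Continuous fun t : ℝ => (2 * sin t) ^ (2 * n) * cos t /
    (((n : ℝ) + 1) * (n + 1).centralBinom)).mul this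

lemma integral_arcTerm_mul_log (n : ℕ) :
    ∫ t in (0 : ℝ)..π / 6, arcTerm n t * log (2 * sin t) =
      -(1 / 8) * (1 / (((n : ℝ) + 1) ^ 3 * (n + 1).centralBinom)) := by
  have hpi := pi_pos
  have hC := cb_pos (n + 1)
  -- With `u = 2 sin t` and `m = n + 1`, the primitive is
  -- `(u^{2m} log u - u^{2m} / (2m)) / (4 m² C(2m,m))`; it vanishes at `u = 0`.
  have hcont : Continuous fun t : ℝ => 1 / (4 * ((n : ℝ) + 1) ^ 2 * (n + 1).centralBinom) *
      ((2 * sin t) ^ (2 * n + 1) * ((2 * sin t) * log (2 * sin t)) -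
        (2 * sin t) ^ (2 * n + 2) / (2 * (n + 1))) := by
    have := Real.continuous_mul_log.comp (show Continuous fun t : ℝ => 2 * sin t by fun_prop)
    exact continuous_const.mul (((by fun_prop : Continuous fun t : ℝ =>
      (2 * sin t) ^ (2 * n + 1)).mul this).sub (by fun_prop))
  rw [intervalIntegral.integral_eq_sub_of_hasDerivAt_of_le (by positivity) hcont.continuousOn
    ?_ ((continuous_arcTerm_mul_log n).intervalIntegrable _ _)]
  · simp only [sin_pi_div_six, sin_zero]
    norm_num
    field_simp
    norm_num
  · intro t ht
    have hs : 0 < sin t := sin_pos_of_pos_of_lt_pi ht.1 (by linarith [ht.2])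
    have hu : HasDerivAt (fun t : ℝ => 2 * sin t) (2 * cos t) t := (hasDerivAt_sin t).const_mul 2
    have h1 := (((hu.pow (2 * n + 1)).mul (hu.mul (hu.log (by positivity)))).sub
      ((hu.pow (2 * n + 2)).div_const (2 * ((n : ℝ) + 1)))).const_mul
        (1 / (4 * ((n : ℝ) + 1) ^ 2 * (n + 1).centralBinom))
    refine h1.congr_deriv ?_
    simp only [Pi.pow_apply, Pi.mul_apply, arcTerm]
    have e1 : 2 * n + 1 - 1 = 2 * n := by omega
    have e2 : 2 * n + 2 - 1 = 2 * n + 1 := by omega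
    rw [e1, e2]
    push_cast
    field_simp
    ring

lemma hasSum_integral_form :
    HasSum (fun n : ℕ => 1 / (((n : ℝ) + 1) ^ 3 * (n + 1).centralBinom))
      (-8 * ∫ t in (0 : ℝ)..π / 6, t * log (2 * sin t)) := by
  have hpi := pi_pos
  have key : HasSum (fun n : ℕ => ∫ t in (0 : ℝ)..π / 6, arcTerm n t * log (2 * sin t))
      (∫ t in (0 : ℝ)..π / 6, t * log (2 * sin t)) := by
    have hgeo : Summable fun n : ℕ => (1 / 2 : ℝ) ^ n :=
      summable_geometric_of_lt_one (by norm_num) (by norm_num)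
    refine intervalIntegral.hasSum_integral_of_dominated_convergence
      (fun n _ => (1 / 2 : ℝ) ^ n)
      (fun n => (continuous_arcTerm_mul_log n).aestronglyMeasurable) (fun n => ?_)
      (.of_forall fun _ _ => hgeo) (by simp) (.of_forall fun t ht => ?_)
    · refine .of_forall fun t ht => ?_
      rw [Set.uIoc_of_le (by positivity)] at ht
      have hs : 0 < sin t := sin_pos_of_pos_of_lt_pi ht.1 (by linarith [ht.2])
      have hs1 := (sin_bounds ht.1.le ht.2).2
      have hlog := (abs_log_mul_self_lt (2 * sin t) (by positivity) (by linarith)).le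
      have hcos := abs_cos_le_one t
      have hC := cb_pos (n + 1)
      have e : arcTerm n t * log (2 * sin t) = (2 * sin t) ^ (2 * n) * cos t /
          (((n : ℝ) + 1) * (n + 1).centralBinom) * (log (2 * sin t) * (2 * sin t)) := by
        unfold arcTerm; ring
      rw [e, norm_eq_abs, abs_mul, abs_div, abs_mul,
        abs_of_pos (by positivity : 0 < (2 * sin t) ^ (2 * n)),
        abs_of_pos (by positivity : 0 < ((n : ℝ) + 1) * (n + 1).centralBinom)]
      have hp : (2 * sin t) ^ (2 * n) ≤ 1 := pow_le_one₀ (by positivity) (by linarith)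
      have hC2 : (2 : ℝ) ^ n ≤ ((n : ℝ) + 1) * (n + 1).centralBinom := by
        have := cb_ge (n + 1)
        rw [pow_succ] at this
        nlinarith [pow_pos (two_pos : (0 : ℝ) < 2) n, Nat.cast_nonneg (α := ℝ) n]
      calc _ ≤ 1 * 1 / (2 : ℝ) ^ n * 1 := by gcongr
        _ = _ := by simp
    · rw [Set.uIoc_of_le (by positivity)] at ht
      exact (hasSum_arcTerm ht.1.le ht.2).mul_right _
  refine (key.mul_left (-8)).congr_fun ?_
  intro n
  rw [integral_arcTerm_mul_log]; ring

/-! ### The log-sine integral as a Fourier series -/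

/-- `log |1 - r e^{2it}|`, which tends to `log (2 sin t)` as `r → 1⁻` when `0 < t < π`. -/
noncomputable def poissonLog (r t : ℝ) : ℝ := log (1 - 2 * r * cos (2 * t) + r ^ 2) / 2

/-- The real part of the power series of `-log (1 - z)` at `z = r e^{2it}`. The term `k = 0` is zero
by division by zero. -/
lemma hasSum_poissonLog {r : ℝ} (h0 : 0 ≤ r) (h1 : r < 1) (t : ℝ) :
    HasSum (fun k : ℕ => r ^ k * cos (2 * k * t) / k) (-poissonLog r t) := by
  set z : ℂ := r * Complex.exp ((2 * t : ℝ) * Complex.I) with hz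
  have hnorm : ‖z‖ < 1 := by
    rw [hz, norm_mul, Complex.norm_exp_ofReal_mul_I, mul_one, Complex.norm_real, norm_eq_abs,
      abs_of_nonneg h0]
    exact h1
  have h := Complex.hasSum_re (Complex.hasSum_taylorSeries_neg_log hnorm)
  have hre : (-Complex.log (1 - z)).re = -poissonLog r t := by
    rw [Complex.neg_re, Complex.log_re, poissonLog, Complex.norm_def, log_sqrt (Complex.normSq_nonneg _)]
    congr 3
    rw [Complex.normSq_apply, hz, Complex.exp_mul_I, ← Complex.ofReal_cos, ← Complex.ofReal_sin]
    have hcs := sin_sq_add_cos_sq (2 * t)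
    generalize cos (2 * t) = c at hcs ⊢
    generalize sin (2 * t) = s at hcs ⊢
    simp
    linear_combination r ^ 2 * hcs
  rw [hre] at h
  refine h.congr_fun fun k => ?_
  have : z ^ k / k = ((r ^ k / k : ℝ) : ℂ) * Complex.exp ((2 * k * t : ℝ) * Complex.I) := by
    rw [hz, mul_pow, ← Complex.exp_nat_mul]
    push_cast
    rw [show (k : ℂ) * (2 * t * Complex.I) = 2 * k * t * Complex.I by ring]
    ring
  rw [this, Complex.re_ofReal_mul, Complex.exp_ofReal_mul_I_re]
  ring

/-- `8/k` times `∫₀^{π/6} t cos(2kt) dt`, for `k ≥ 1`; the value at `k = 0` is zero by division by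
zero. -/
noncomputable def clausenTerm (k : ℕ) : ℝ :=
  2 * π / 3 * (sin (k * (π / 3)) / k ^ 2) + 2 * ((cos (k * (π / 3)) - 1) / k ^ 3)

lemma integral_mul_cos (k : ℕ) (r : ℝ) :
    ∫ t in (0 : ℝ)..π / 6, t * (r ^ k * cos (2 * k * t) / k) = 1 / 8 * (r ^ k * clausenTerm k) := by
  rcases Nat.eq_zero_or_pos k with rfl | hk
  · simp [clausenTerm]
  have hk' : (0 : ℝ) < k := by exact_mod_cast hk
  have hd : ∀ t : ℝ, HasDerivAt (fun t : ℝ => r ^ k / k *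
      (t * sin (2 * k * t) / (2 * k) + cos (2 * k * t) / (4 * k ^ 2)))
      (t * (r ^ k * cos (2 * k * t) / k)) t := by
    intro t
    have hu : HasDerivAt (fun t : ℝ => 2 * k * t) (2 * k) t := by
      simpa using (hasDerivAt_id t).const_mul (2 * (k : ℝ))
    have := ((((hasDerivAt_id t).mul hu.sin).div_const (2 * (k : ℝ))).add
      (hu.cos.div_const (4 * (k : ℝ) ^ 2))).const_mul (r ^ k / (k : ℝ))
    refine this.congr_deriv ?_
    simp only [id]
    field_simp
    ring
  rw [intervalIntegral.integral_eq_sub_of_hasDerivAt (fun t _ => hd t)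
    (Continuous.intervalIntegrable (by fun_prop) _ _), clausenTerm,
    show 2 * (k : ℝ) * (π / 6) = k * (π / 3) by ring]
  simp only [mul_zero, sin_zero, cos_zero]
  field_simp
  ring

lemma hasSum_abel {r : ℝ} (h0 : 0 ≤ r) (h1 : r < 1) :
    HasSum (fun k : ℕ => r ^ k * clausenTerm k)
      (-8 * ∫ t in (0 : ℝ)..π / 6, t * poissonLog r t) := by
  have hpi := pi_pos
  have hpi4 := pi_le_four
  have key : HasSum (fun k : ℕ => ∫ t in (0 : ℝ)..π / 6, t * (r ^ k * cos (2 * k * t) / k))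
      (∫ t in (0 : ℝ)..π / 6, t * -poissonLog r t) := by
    refine intervalIntegral.hasSum_integral_of_dominated_convergence (fun k _ => r ^ k)
      (fun k => Continuous.aestronglyMeasurable (by fun_prop)) (fun k => ?_)
      (.of_forall fun _ _ => summable_geometric_of_lt_one h0 h1) (by simp)
      (.of_forall fun t _ => (hasSum_poissonLog h0 h1 t).mul_left t)
    refine .of_forall fun t ht => ?_
    rw [Set.uIoc_of_le (by positivity)] at ht
    rcases Nat.eq_zero_or_pos k with rfl | hk
    · simp
    have hk' : (1 : ℝ) ≤ k := by exact_mod_cast hk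
    rw [norm_eq_abs, abs_mul, abs_div, abs_mul, abs_of_pos ht.1, abs_of_nonneg (pow_nonneg h0 k),
      abs_of_pos (by linarith : (0 : ℝ) < k)]
    have hc := abs_cos_le_one (2 * k * t)
    have ht1 : t ≤ 1 := by linarith [ht.2]
    calc t * (r ^ k * |cos (2 * k * t)| / k) ≤ 1 * (r ^ k * 1 / 1) := by gcongr
      _ = r ^ k := by simp
  have e : (-8 * ∫ t in (0 : ℝ)..π / 6, t * poissonLog r t) =
      8 * ∫ t in (0 : ℝ)..π / 6, t * -poissonLog r t := by
    simp only [mul_neg, intervalIntegral.integral_neg]; ring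
  rw [e]
  refine (key.mul_left 8).congr_fun fun k => ?_
  rw [integral_mul_cos]; ring

/-- A bound uniform in `r`: `|1 - r e^{2it}|` lies between `sin 2t ≥ t` and `2`, so `t` times its
logarithm is controlled by `t log t`. -/
lemma poissonLog_bound {r t : ℝ} (h0 : 0 ≤ r) (h1 : r < 1) (ht0 : 0 < t) (ht : t ≤ π / 6) :
    |t * poissonLog r t| ≤ 1 := by
  have hpi := pi_pos
  have hpi4 := pi_le_four
  have ht1 : t ≤ 1 := by linarith
  have hsin : t ≤ sin (2 * t) := by
    have h := mul_le_sin (x := 2 * t) (by linarith) (by linarith)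
    have : t ≤ 2 / π * (2 * t) := by
      rw [div_mul_eq_mul_div, le_div_iff₀ hpi]; nlinarith
    linarith
  have hc := sin_sq_add_cos_sq (2 * t)
  have hlow : t ^ 2 ≤ 1 - 2 * r * cos (2 * t) + r ^ 2 := by
    nlinarith [sq_nonneg (r - cos (2 * t))]
  have hup : 1 - 2 * r * cos (2 * t) + r ^ 2 ≤ 2 ^ 2 := by
    nlinarith [neg_one_le_cos (2 * t)]
  have ht2 : 0 < t ^ 2 := by positivity
  have l1 := log_le_log ht2 hlow
  have l2 := log_le_log (ht2.trans_le hlow) hup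
  rw [log_pow] at l1 l2
  push_cast at l1 l2
  have hlog2 := log_two_lt_d9
  have hb := (abs_lt.1 (abs_log_mul_self_lt t ht0 ht1)).1
  rw [abs_le, poissonLog]
  constructor
  · nlinarith
  · nlinarith

lemma tendsto_integral_poissonLog :
    Filter.Tendsto (fun r => ∫ t in (0 : ℝ)..π / 6, t * poissonLog r t) (nhdsWithin 1 (Set.Iio 1))
      (nhds (∫ t in (0 : ℝ)..π / 6, t * log (2 * sin t))) := by
  have hpi := pi_pos
  have hev : ∀ᶠ r : ℝ in nhdsWithin 1 (Set.Iio 1), r ∈ Set.Ioo (0 : ℝ) 1 :=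
    Ioo_mem_nhdsLT one_pos
  refine intervalIntegral.tendsto_integral_filter_of_dominated_convergence (fun _ => 1)
    (.of_forall fun r => ?_) ?_ (by simp) (.of_forall fun t ht => ?_)
  · unfold poissonLog
    exact Measurable.aestronglyMeasurable (by fun_prop)
  · filter_upwards [hev] with r hr
    refine .of_forall fun t ht => ?_
    rw [Set.uIoc_of_le (by positivity)] at ht
    exact poissonLog_bound hr.1.le hr.2 ht.1 ht.2
  · rw [Set.uIoc_of_le (by positivity)] at ht
    have hs : 0 < sin t := sin_pos_of_pos_of_lt_pi ht.1 (by linarith [ht.2])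
    have e : 1 - 2 * 1 * cos (2 * t) + 1 ^ 2 = (2 * sin t) ^ 2 := by
      rw [cos_two_mul]; nlinarith [sin_sq_add_cos_sq t]
    have e2 : log (2 * sin t) = poissonLog 1 t := by
      rw [poissonLog, e, log_pow]; push_cast; ring
    rw [e2]
    have hne : 1 - 2 * 1 * cos (2 * t) + 1 ^ 2 ≠ 0 := by rw [e]; positivity
    have hcont : ContinuousAt (fun r : ℝ => t * poissonLog r t) 1 := by
      unfold poissonLog
      have hc : ContinuousAt (fun r : ℝ => 1 - 2 * r * cos (2 * t) + r ^ 2) 1 := by fun_prop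
      exact continuousAt_const.mul ((hc.log hne).div_const 2)
    exact hcont.tendsto.mono_left nhdsWithin_le_nhds

lemma summable_abs_clausenTerm : Summable fun k => |clausenTerm k| := by
  have hpi := pi_pos
  have h2 : Summable fun k : ℕ => 1 / (k : ℝ) ^ 2 := summable_one_div_nat_pow.2 (by norm_num)
  have h3 : Summable fun k : ℕ => 1 / (k : ℝ) ^ 3 := summable_one_div_nat_pow.2 (by norm_num)
  refine Summable.of_nonneg_of_le (fun _ => abs_nonneg _) (fun k => ?_)
    ((h2.mul_left (2 * π / 3)).add (h3.mul_left 4))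
  have hs := abs_sin_le_one (k * (π / 3))
  have hc : |cos (k * (π / 3)) - 1| ≤ 2 := by
    rw [abs_le]; constructor <;> linarith [neg_one_le_cos (k * (π / 3)), cos_le_one (k * (π / 3))]
  have hk : (0 : ℝ) ≤ k := Nat.cast_nonneg k
  rw [clausenTerm]
  refine (abs_add_le _ _).trans ?_
  rw [abs_mul (2 * π / 3), abs_mul 2, abs_of_pos (by positivity : 0 < 2 * π / 3), abs_div, abs_div,
    abs_of_nonneg (pow_nonneg hk 2), abs_of_nonneg (pow_nonneg hk 3), abs_two,
    show (4 : ℝ) * (1 / (k : ℝ) ^ 3) = 2 * (2 / (k : ℝ) ^ 3) by ring]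
  gcongr

/-- The limit `r → 1⁻` of `hasSum_abel`. -/
lemma tsum_clausenTerm :
    ∑' k, clausenTerm k = -8 * ∫ t in (0 : ℝ)..π / 6, t * log (2 * sin t) := by
  have hev : ∀ᶠ r : ℝ in nhdsWithin 1 (Set.Iio 1), r ∈ Set.Ioo (0 : ℝ) 1 :=
    Ioo_mem_nhdsLT one_pos
  have hL : Filter.Tendsto (fun r : ℝ => ∑' k, r ^ k * clausenTerm k) (nhdsWithin 1 (Set.Iio 1))
      (nhds (∑' k, clausenTerm k)) := by
    refine tendsto_tsum_of_dominated_convergence summable_abs_clausenTerm (fun k => ?_) ?_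
    · have : ContinuousAt (fun r : ℝ => r ^ k * clausenTerm k) 1 := by fun_prop
      simpa using this.tendsto.mono_left nhdsWithin_le_nhds
    · filter_upwards [hev] with r hr k
      rw [norm_eq_abs, abs_mul, abs_of_nonneg (pow_nonneg hr.1.le k)]
      exact mul_le_of_le_one_left (abs_nonneg _) (pow_le_one₀ hr.1.le hr.2.le)
  refine tendsto_nhds_unique hL ((tendsto_integral_poissonLog.const_mul (-8)).congr' ?_)
  filter_upwards [hev] with r hr
  exact (hasSum_abel hr.1.le hr.2).tsum_eq.symm

/-! ### Evaluation by residue classes modulo 6 -/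

/-- `∑_{m ≥ 0} 1/(N m + j)^s`. For `j = 0` the term `m = 0` is zero by division by zero when
`s ≠ 0`, so the sum effectively starts at `m = 1`. -/
noncomputable def resSum (s N j : ℕ) : ℝ := ∑' m : ℕ, 1 / ((N : ℝ) * m + j) ^ s

lemma summable_res (s N j : ℕ) (hs : 1 < s) (hN : 0 < N) :
    Summable fun m : ℕ => 1 / ((N : ℝ) * m + j) ^ s := by
  have h : Summable fun k : ℕ => 1 / (k : ℝ) ^ s := summable_one_div_nat_pow.2 hs
  have := h.comp_injective (i := fun m : ℕ => N * m + j)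
    (fun a b hab => Nat.eq_of_mul_eq_mul_left hN (Nat.add_right_cancel hab))
  refine this.congr fun m => ?_
  simp

/-- Pulling a common factor `d` out of the modulus and the residue. -/
lemma resSum_mul (s N j d : ℕ) (hd : 0 < d) :
    resSum s (d * N) (d * j) = resSum s N j / d ^ s := by
  unfold resSum
  rw [← tsum_div_const]
  refine tsum_congr fun m => ?_
  have : (d : ℝ) ≠ 0 := by positivity
  push_cast
  rw [show (d : ℝ) * N * m + d * j = d * (N * m + j) by ring, mul_pow]
  rw [one_div, mul_inv, one_div, div_eq_mul_inv, mul_comm]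

lemma tsum_residues {f : ℕ → ℝ} (hf : Summable f) (e : ℕ) :
    ∑' n, f n = ∑ i : Fin (e + 1), ∑' m : ℕ, f (i + (e + 1) * m) :=
  Nat.sumByResidueClasses hf (e + 1)

/-- A class modulo `N` is the union of `e + 1` classes modulo `(e + 1) N`. -/
lemma resSum_split (s N j e : ℕ) (hs : 1 < s) (hN : 0 < N) :
    resSum s N j = ∑ i : Fin (e + 1), resSum s ((e + 1) * N) (j + N * i) := by
  unfold resSum
  rw [tsum_residues (summable_res s N j hs hN) e]
  refine Finset.sum_congr rfl fun i _ => tsum_congr fun m => ?_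
  push_cast
  congr 2
  ring

lemma resSum_one (s : ℕ) (hs : 1 < s) : resSum s 1 0 = ∑' n : ℕ, 1 / ((n : ℝ) + 1) ^ s := by
  unfold resSum
  rw [(summable_res s 1 0 hs one_pos).tsum_eq_zero_add]
  simp [show s ≠ 0 by omega]

lemma resSum_two_one : resSum 2 1 0 = π ^ 2 / 6 := by
  rw [← hasSum_zeta_two.tsum_eq]
  simp [resSum]

lemma tsum_clausenTerm_residue (i : ℕ) :
    ∑' m : ℕ, clausenTerm (i + 6 * m) =
      2 * π / 3 * (sin (i * (π / 3)) * resSum 2 6 i) +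
        2 * ((cos (i * (π / 3)) - 1) * resSum 3 6 i) := by
  have h2 := summable_res 2 6 i (by norm_num) (by norm_num)
  have h3 := summable_res 3 6 i (by norm_num) (by norm_num)
  unfold resSum
  rw [← tsum_mul_left, ← tsum_mul_left, ← tsum_mul_left, ← tsum_mul_left,
    ← Summable.tsum_add ((h2.mul_left _).mul_left _) ((h3.mul_left _).mul_left _)]
  refine tsum_congr fun m => ?_
  have harg : ((i + 6 * m : ℕ) : ℝ) * (π / 3) = i * (π / 3) + m * (2 * π) := by push_cast; ring
  rw [clausenTerm, harg, sin_add_nat_mul_two_pi, cos_add_nat_mul_two_pi]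
  push_cast
  rw [add_comm (i : ℝ)]
  ring

lemma tsum_clausenTerm_eq :
    ∑' k, clausenTerm k = π * √3 * (∑' n : ℕ, 1 / (3 * (n : ℝ) + 1) ^ 2) -
        (4 / 3) * (∑' n : ℕ, 1 / ((n : ℝ) + 1) ^ 3) - (2 * √3 / 27) * π ^ 3 := by
  have hA : (∑' n : ℕ, 1 / (3 * (n : ℝ) + 1) ^ 2) = resSum 2 3 1 := by simp [resSum]
  rw [hA, ← resSum_one 3 (by norm_num), tsum_residues (summable_abs_clausenTerm.of_abs) 5]
  simp only [Nat.reduceAdd, tsum_clausenTerm_residue]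
  have s1 : sin (1 * (π / 3)) = √3 / 2 := by rw [one_mul, sin_pi_div_three]
  have c1 : cos (1 * (π / 3)) = 1 / 2 := by rw [one_mul, cos_pi_div_three]
  have s2 : sin (2 * (π / 3)) = √3 / 2 := by
    rw [show 2 * (π / 3) = π - π / 3 by ring, sin_pi_sub, sin_pi_div_three]
  have c2 : cos (2 * (π / 3)) = -(1 / 2) := by
    rw [show 2 * (π / 3) = π - π / 3 by ring, cos_pi_sub, cos_pi_div_three]
  have s3 : sin (3 * (π / 3)) = 0 := by rw [show 3 * (π / 3) = π by ring, sin_pi]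
  have c3 : cos (3 * (π / 3)) = -1 := by rw [show 3 * (π / 3) = π by ring, cos_pi]
  have s4 : sin (4 * (π / 3)) = -(√3 / 2) := by
    rw [show 4 * (π / 3) = π / 3 + π by ring, sin_add_pi, sin_pi_div_three]
  have c4 : cos (4 * (π / 3)) = -(1 / 2) := by
    rw [show 4 * (π / 3) = π / 3 + π by ring, cos_add_pi, cos_pi_div_three]
  have s5 : sin (5 * (π / 3)) = -(√3 / 2) := by
    rw [show 5 * (π / 3) = 2 * π - π / 3 by ring, sin_two_pi_sub, sin_pi_div_three]
  have c5 : cos (5 * (π / 3)) = 1 / 2 := by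
    rw [show 5 * (π / 3) = 2 * π - π / 3 by ring, cos_two_pi_sub, cos_pi_div_three]
  have a0 := resSum_split 2 1 0 2 (by norm_num) (by norm_num)
  have a1 := resSum_split 2 3 1 1 (by norm_num) (by norm_num)
  have a2 := resSum_split 2 3 2 1 (by norm_num) (by norm_num)
  have a3 := resSum_mul 2 1 0 3 (by norm_num)
  have a4 := resSum_mul 2 3 1 2 (by norm_num)
  have a5 := resSum_mul 2 3 2 2 (by norm_num)
  have b0 := resSum_split 3 1 0 5 (by norm_num) (by norm_num)
  have b1 := resSum_split 3 2 0 2 (by norm_num) (by norm_num)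
  have b2 := resSum_split 3 3 0 1 (by norm_num) (by norm_num)
  have b3 := resSum_mul 3 1 0 2 (by norm_num)
  have b4 := resSum_mul 3 1 0 3 (by norm_num)
  have b5 := resSum_mul 3 1 0 6 (by norm_num)
  simp [Fin.sum_univ_succ, resSum_two_one] at a0 a1 a2 a3 a4 a5 b0 b1 b2 b3 b4 b5
  -- For `s = 2` the classes of 1, 2, 4, 5 are determined by `∑ 1/(3n+1)²` and `π²`. For `s = 3`
  -- only the sums over the pairs `{1, 5}` and `{2, 4}` and the class of `3` are determined by `ζ(3)`; this
  -- suffices because the cosine is even.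
  have hB : resSum 2 3 2 = 4 * π ^ 2 / 27 - resSum 2 3 1 := by linarith
  have r1 : resSum 2 6 1 = resSum 2 3 1 - resSum 2 3 2 / 4 := by linarith
  have r5 : resSum 2 6 5 = resSum 2 3 2 - resSum 2 3 1 / 4 := by linarith
  have t3 : resSum 3 6 3 = 7 / 216 * resSum 3 1 0 := by linarith
  have t4 : resSum 3 6 4 = 26 / 216 * resSum 3 1 0 - resSum 3 6 2 := by linarith
  have t5 : resSum 3 6 5 = 182 / 216 * resSum 3 1 0 - resSum 3 6 1 := by linarith
  rw [Fin.sum_univ_six]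
  simp only [Fin.coe_ofNat_eq_mod, Nat.reduceMod, Nat.cast_zero, Nat.cast_one, Nat.cast_ofNat,
    s1, c1, s2, c2, s3, c3, s4, c4, s5, c5, zero_mul, sin_zero, cos_zero,
    r1, a4, a5, r5, t3, t4, t5, hB]
  ring

/-- `∑_{n=1}^∞ 1/(n³ C(2n,n)) = π√3 ∑_{n=0}^∞ 1/(3n+1)² − (4/3)ζ(3) − (2√3/27)π³`. -/
theorem stmt_13 :
    ∑' n : ℕ, 1 / (((n : ℝ) + 1) ^ 3 * ((2 * (n + 1)).choose (n + 1) : ℝ)) =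
      π * Real.sqrt 3 * (∑' n : ℕ, 1 / (3 * (n : ℝ) + 1) ^ 2) -
        (4 / 3) * (∑' n : ℕ, 1 / ((n : ℝ) + 1) ^ 3) -
        (2 * Real.sqrt 3 / 27) * π ^ 3 := by
  rw [← tsum_clausenTerm_eq, tsum_clausenTerm, ← hasSum_integral_form.tsum_eq]
  rfl
end

section
/- ∫_0^{π/2} u² log(sin u) du = −(π³/24) log 2 + (3π/16) ζ(3). -/
/-!
The Fourier expansion `log (2 sin u) = -∑ cos (2nu) / n` is used in its Abel-regularised form: for
`0 ≤ r < 1` the real part of the Taylor series of `-log (1 - z)` at `z = r e^{2iu}` gives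
`log ‖1 - r e^{2iu}‖ = -∑ rⁿ cos (2nu) / n`, which converges uniformly in `u`. Since
`∫_0^{π/2} u² cos (2nu) du = π (-1)ⁿ / (4n²)` (`integral_sq_mul_cos`), integrating termwise yields
`∫_0^{π/2} u² log ‖1 - r e^{2iu}‖ du = -(π/4) ∑ rⁿ (-1)ⁿ / n³` (`integral_abel`).

As `r → 1⁻` both sides converge by dominated convergence. On the left, `‖1 - e^{2iu}‖ = 2 sin u`,
and the bounds `sin u ≤ ‖1 - r e^{2iu}‖ ≤ 2` control the logarithm by the integrable function
`log 2 - log (sin u)`. On the right, `∑ (-1)ⁿ / n³ = -(3/4) ζ(3)` (`tsum_alternating`).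
-/

open Real

/-- The point `r e^{2iu}` at which the Taylor series of the logarithm is evaluated. -/
noncomputable def abelPt (r u : ℝ) : ℂ := r * Complex.exp ((2 * u : ℝ) * Complex.I)

lemma norm_abelPt {r : ℝ} (hr : 0 ≤ r) (u : ℝ) : ‖abelPt r u‖ = r := by
  rw [abelPt, norm_mul, Complex.norm_exp_ofReal_mul_I, mul_one, Complex.norm_real,
    Real.norm_of_nonneg hr]

lemma continuous_abelPt (r : ℝ) : Continuous (abelPt r) := by
  unfold abelPt; fun_prop

lemma re_abelPt_pow (r u : ℝ) (n : ℕ) :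
    (abelPt r u ^ n / n).re = r ^ n * cos (2 * n * u) / n := by
  have h : abelPt r u ^ n / n =
      ((r ^ n / n : ℝ) : ℂ) * Complex.exp ((2 * n * u : ℝ) * Complex.I) := by
    rw [abelPt, mul_pow, ← Complex.exp_nat_mul]
    push_cast
    ring_nf
  rw [h, Complex.re_ofReal_mul, Complex.exp_ofReal_mul_I_re]
  ring

lemma hasSum_log_norm {r : ℝ} (hr : 0 ≤ r) (hr1 : r < 1) (u : ℝ) :
    HasSum (fun n : ℕ => r ^ n * cos (2 * n * u) / n) (-log ‖1 - abelPt r u‖) := by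
  have h := Complex.hasSum_re
    (Complex.hasSum_taylorSeries_neg_log (z := abelPt r u) (by rwa [norm_abelPt hr]))
  simp only [re_abelPt_pow, Complex.neg_re, Complex.log_re] at h
  exact h

lemma norm_one_sub_abelPt_one {u : ℝ} (hu : 0 ≤ sin u) : ‖1 - abelPt 1 u‖ = 2 * sin u := by
  have h : 1 - abelPt 1 u =
      ((2 * sin u : ℝ) : ℂ) * (Complex.exp (u * Complex.I) * (-Complex.I)) := by
    have h2 : abelPt 1 u = Complex.exp (u * Complex.I) ^ 2 := by
      rw [abelPt, ← Complex.exp_nat_mul]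
      push_cast
      ring_nf
    rw [h2, Complex.exp_mul_I]
    push_cast
    have h3 := Complex.sin_sq_add_cos_sq (u : ℂ)
    linear_combination (-1 : ℂ) * h3 + Complex.sin u ^ 2 * Complex.I_sq
  rw [h, norm_mul, norm_mul, Complex.norm_exp_ofReal_mul_I, Complex.norm_real,
    Real.norm_of_nonneg (by positivity)]
  simp

lemma sin_le_norm {r u : ℝ} (hr : 0 ≤ r) (hr1 : r < 1) (hu : 0 ≤ sin u) :
    sin u ≤ ‖1 - abelPt r u‖ := by
  have h1 : 1 - r ≤ ‖1 - abelPt r u‖ := by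
    have := norm_sub_norm_le (1 : ℂ) (abelPt r u)
    rwa [norm_abelPt hr, norm_one] at this
  have h2 : ‖1 - abelPt 1 u‖ ≤ ‖1 - abelPt r u‖ + (1 - r) := by
    have h : 1 - abelPt 1 u = (1 - abelPt r u) - abelPt (1 - r) u := by
      simp only [abelPt]; push_cast; ring
    rw [h]
    refine (norm_sub_le _ _).trans ?_
    rw [norm_abelPt (by linarith)]
  rw [norm_one_sub_abelPt_one hu] at h2
  linarith

lemma abs_log_norm_le {r u : ℝ} (hr : 0 ≤ r) (hr1 : r < 1) (hu : 0 < sin u) :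
    |log ‖1 - abelPt r u‖| ≤ log 2 - log (sin u) := by
  have h1 := sin_le_norm hr hr1 hu.le
  have h2 : ‖1 - abelPt r u‖ ≤ 2 := by
    have := norm_sub_le (1 : ℂ) (abelPt r u)
    rw [norm_abelPt hr, norm_one] at this
    linarith
  have h3 := log_le_log hu h1
  have h4 := log_le_log (hu.trans_le h1) h2
  have h5 := log_nonpos hu.le (sin_le_one u)
  have h6 := log_nonneg (one_le_two (α := ℝ))
  rw [abs_le]
  constructor <;> linarith

/-- For `n = 0` the right-hand side is `0` by division by zero, hence the hypothesis. -/
lemma integral_sq_mul_cos {n : ℕ} (hn : n ≠ 0) :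
    ∫ u in (0 : ℝ)..(π / 2), u ^ 2 * cos (2 * n * u) = π * (-1) ^ n / (4 * n ^ 2) := by
  have hn' : (n : ℝ) ≠ 0 := by exact_mod_cast hn
  have hd : ∀ u ∈ Set.uIcc (0 : ℝ) (π / 2), HasDerivAt
      (fun u : ℝ => u ^ 2 * sin (2 * n * u) / (2 * n) + u * cos (2 * n * u) / (2 * n ^ 2)
        - sin (2 * n * u) / (4 * n ^ 3)) (u ^ 2 * cos (2 * n * u)) u := by
    intro u _
    have hl : HasDerivAt (fun u : ℝ => 2 * n * u) (2 * n) u := by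
      simpa using (hasDerivAt_id u).const_mul (2 * n : ℝ)
    have h := ((((hasDerivAt_pow 2 u).mul hl.sin).div_const (2 * n : ℝ)).add
      (((hasDerivAt_id u).mul hl.cos).div_const (2 * n ^ 2 : ℝ))).sub
      (hl.sin.div_const (4 * n ^ 3 : ℝ))
    refine h.congr_deriv ?_
    simp only [id]
    field_simp
    push_cast
    ring
  rw [intervalIntegral.integral_eq_sub_of_hasDerivAt hd
    (Continuous.intervalIntegrable (by fun_prop) _ _)]
  have h1 : 2 * (n : ℝ) * (π / 2) = n * π := by ring
  simp only [h1, sin_nat_mul_pi, cos_nat_mul_pi]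
  simp
  field_simp
  norm_num

lemma integral_abel {r : ℝ} (hr : 0 ≤ r) (hr1 : r < 1) :
    ∫ u in (0 : ℝ)..(π / 2), u ^ 2 * log ‖1 - abelPt r u‖ =
      ∑' n : ℕ, -(π / 4) * (r ^ n * ((-1) ^ n / n ^ 3)) := by
  have h : HasSum (fun n : ℕ => ∫ u in (0 : ℝ)..(π / 2), u ^ 2 * (r ^ n * cos (2 * n * u) / n))
      (∫ u in (0 : ℝ)..(π / 2), u ^ 2 * -log ‖1 - abelPt r u‖) := by
    refine intervalIntegral.hasSum_integral_of_dominated_convergence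
      (fun n _ => (π / 2) ^ 2 * r ^ n) ?_ ?_ ?_ ?_ ?_
    · intro n
      exact Continuous.aestronglyMeasurable (by fun_prop)
    · refine fun n => Filter.Eventually.of_forall fun u hu => ?_
      rw [Set.uIoc_of_le (by positivity)] at hu
      rw [norm_mul, norm_pow, norm_div, norm_mul, norm_pow, Real.norm_of_nonneg hu.1.le,
        Real.norm_of_nonneg hr]
      have hc : ‖cos (2 * n * u)‖ ≤ 1 := abs_cos_le_one _
      rcases Nat.eq_zero_or_pos n with rfl | hn
      · simp; positivity
      · have hn1 : (1 : ℝ) ≤ ‖(n : ℝ)‖ := by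
          rw [Real.norm_of_nonneg (by positivity)]; exact_mod_cast hn
        have h1 : r ^ n * ‖cos (2 * n * u)‖ / ‖(n : ℝ)‖ ≤ r ^ n :=
          (div_le_self (by positivity) hn1).trans
            (mul_le_of_le_one_right (by positivity) hc)
        have := hu.1
        gcongr
        exact hu.2
    · exact Filter.Eventually.of_forall fun u _ =>
        (summable_geometric_of_lt_one hr hr1).mul_left _
    · exact intervalIntegrable_const
    · exact Filter.Eventually.of_forall fun u _ => (hasSum_log_norm hr hr1 u).mul_left _
  have h' := h.neg.tsum_eq
  simp only [mul_neg, intervalIntegral.integral_neg, neg_neg] at h'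
  rw [← h']
  refine tsum_congr fun n => ?_
  rcases eq_or_ne n 0 with rfl | hn
  · simp
  · have h1 : ∀ u : ℝ, u ^ 2 * (r ^ n * cos (2 * n * u) / n) =
        (r ^ n / n) * (u ^ 2 * cos (2 * n * u)) := fun u => by ring
    simp only [h1, intervalIntegral.integral_const_mul, integral_sq_mul_cos hn]
    have hn' : (n : ℝ) ≠ 0 := by exact_mod_cast hn
    field_simp

/-- The even-index part of `∑ 1 / n³` is an eighth of the whole, and the alternating sum is twice
the even part minus the whole. -/
lemma tsum_alternating :
    ∑' n : ℕ, (-1 : ℝ) ^ n / n ^ 3 = -(3 / 4) * ∑' n : ℕ, 1 / ((n : ℝ) + 1) ^ 3 := by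
  have hs : Summable fun n : ℕ => 1 / (n : ℝ) ^ 3 :=
    Real.summable_one_div_nat_pow.2 (by norm_num)
  have hz : ∑' n : ℕ, 1 / ((n : ℝ) + 1) ^ 3 = ∑' n : ℕ, 1 / (n : ℝ) ^ 3 := by
    rw [hs.tsum_eq_zero_add]; simp
  have he : Summable fun n : ℕ => 1 / ((2 * n : ℕ) : ℝ) ^ 3 :=
    hs.comp_injective (mul_right_injective₀ two_ne_zero)
  have ho : Summable fun n : ℕ => 1 / ((2 * n + 1 : ℕ) : ℝ) ^ 3 :=
    hs.comp_injective ((add_left_injective 1).comp (mul_right_injective₀ two_ne_zero))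
  have h1 := tsum_even_add_odd (f := fun n : ℕ => 1 / (n : ℝ) ^ 3) he ho
  have ee : (fun n : ℕ => (-1 : ℝ) ^ (2 * n) / ((2 * n : ℕ) : ℝ) ^ 3) =
      fun n : ℕ => 1 / ((2 * n : ℕ) : ℝ) ^ 3 := by
    ext n; simp [pow_mul]
  have eo : (fun n : ℕ => (-1 : ℝ) ^ (2 * n + 1) / ((2 * n + 1 : ℕ) : ℝ) ^ 3) =
      fun n : ℕ => -(1 / ((2 * n + 1 : ℕ) : ℝ) ^ 3) := by
    ext n; simp [pow_mul, pow_succ, neg_div]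
  have h2 := tsum_even_add_odd (f := fun n : ℕ => (-1 : ℝ) ^ n / (n : ℝ) ^ 3)
    (by rw [ee]; exact he) (by rw [eo]; exact ho.neg)
  rw [ee, eo, tsum_neg] at h2
  have h3 : ∑' n : ℕ, 1 / ((2 * n : ℕ) : ℝ) ^ 3 = 1 / 8 * ∑' n : ℕ, 1 / (n : ℝ) ^ 3 := by
    rw [← tsum_mul_left]
    refine tsum_congr fun n => ?_
    push_cast
    rw [mul_pow, one_div_mul_one_div]
    norm_num
  rw [hz]
  linarith

/-- `∫_0^{π/2} u² log(sin u) du = −(π³/24) log 2 + (3π/16) ζ(3)`. -/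
theorem stmt_14 :
    ∫ u in (0 : ℝ)..(π / 2), u ^ 2 * Real.log (Real.sin u) =
      -(π ^ 3 / 24) * Real.log 2 + (3 * π / 16) * ∑' n : ℕ, 1 / ((n : ℝ) + 1) ^ 3 := by
  have hsin : ∀ u ∈ Set.uIoc (0 : ℝ) (π / 2), 0 < sin u := by
    intro u hu
    rw [Set.uIoc_of_le (by positivity)] at hu
    exact sin_pos_of_pos_of_lt_pi hu.1 (by linarith [hu.2, pi_pos])
  have hlog : IntervalIntegrable (fun u => log (sin u)) MeasureTheory.volume 0 (π / 2) :=
    intervalIntegrable_log_sin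
  have hev : ∀ᶠ r : ℝ in nhdsWithin 1 (Set.Iio 1), 0 ≤ r ∧ r < 1 := by
    filter_upwards [Ioo_mem_nhdsLT (zero_lt_one (α := ℝ))] with r hr
    exact ⟨hr.1.le, hr.2⟩
  have hL : Filter.Tendsto
      (fun r : ℝ => ∫ u in (0 : ℝ)..(π / 2), u ^ 2 * log ‖1 - abelPt r u‖)
      (nhdsWithin 1 (Set.Iio 1))
      (nhds (∫ u in (0 : ℝ)..(π / 2), u ^ 2 * log ‖1 - abelPt 1 u‖)) := by
    refine intervalIntegral.tendsto_integral_filter_of_dominated_convergence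
      (fun u => u ^ 2 * (log 2 - log (sin u))) ?_ ?_ ?_ ?_
    · refine Filter.Eventually.of_forall fun r => Measurable.aestronglyMeasurable ?_
      have := (continuous_abelPt r).measurable
      fun_prop
    · filter_upwards [hev] with r hr
      refine Filter.Eventually.of_forall fun u hu => ?_
      rw [norm_mul, norm_pow, Real.norm_eq_abs, Real.norm_eq_abs, sq_abs]
      exact mul_le_mul_of_nonneg_left (abs_log_norm_le hr.1 hr.2 (hsin u hu)) (sq_nonneg u)
    · exact (intervalIntegrable_const.sub hlog).continuousOn_mul (by fun_prop)
    · refine Filter.Eventually.of_forall fun u hu => ?_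
      have hne : ‖1 - abelPt 1 u‖ ≠ 0 := by
        rw [norm_one_sub_abelPt_one (hsin u hu).le]
        have := hsin u hu
        positivity
      have hc : ContinuousAt (fun r : ℝ => u ^ 2 * log ‖1 - abelPt r u‖) 1 := by
        refine continuousAt_const.mul (ContinuousAt.log ?_ hne)
        unfold abelPt
        fun_prop
      exact hc.tendsto.mono_left nhdsWithin_le_nhds
  have hR : Filter.Tendsto
      (fun r : ℝ => ∑' n : ℕ, -(π / 4) * (r ^ n * ((-1) ^ n / (n : ℝ) ^ 3)))
      (nhdsWithin 1 (Set.Iio 1))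
      (nhds (∑' n : ℕ, -(π / 4) * ((1 : ℝ) ^ n * ((-1) ^ n / (n : ℝ) ^ 3)))) := by
    refine tendsto_tsum_of_dominated_convergence (bound := fun n : ℕ => π / 4 * (1 / (n : ℝ) ^ 3))
      ((Real.summable_one_div_nat_pow.2 (by norm_num)).mul_left _) ?_ ?_
    · intro n
      have hc : ContinuousAt
          (fun r : ℝ => -(π / 4) * (r ^ n * ((-1) ^ n / (n : ℝ) ^ 3))) 1 := by fun_prop
      exact hc.tendsto.mono_left nhdsWithin_le_nhds
    · filter_upwards [hev] with r hr n
      have h1 : r ^ n ≤ 1 := pow_le_one₀ hr.1 hr.2.le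
      have h2 : 0 ≤ r ^ n := pow_nonneg hr.1 n
      rw [norm_mul, norm_mul, norm_div, norm_neg, Real.norm_of_nonneg h2,
        Real.norm_of_nonneg (by positivity : 0 ≤ π / 4), norm_pow, norm_neg, norm_one, one_pow,
        Real.norm_of_nonneg (by positivity : 0 ≤ (n : ℝ) ^ 3)]
      gcongr
      exact mul_le_of_le_one_left (by positivity) h1
  have hEq := tendsto_nhds_unique_of_eventuallyEq hL hR
    (by filter_upwards [hev] with r hr using integral_abel hr.1 hr.2)
  have hI : ∫ u in (0 : ℝ)..(π / 2), u ^ 2 * log ‖1 - abelPt 1 u‖ =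
      ∫ u in (0 : ℝ)..(π / 2), (u ^ 2 * log 2 + u ^ 2 * log (sin u)) := by
    refine intervalIntegral.integral_congr_ae (Filter.Eventually.of_forall fun u hu => ?_)
    rw [norm_one_sub_abelPt_one (hsin u hu).le, log_mul two_ne_zero (hsin u hu).ne']
    ring
  rw [hI, intervalIntegral.integral_add (Continuous.intervalIntegrable (by fun_prop) _ _)
    (hlog.continuousOn_mul (by fun_prop)), intervalIntegral.integral_mul_const, integral_pow,
    tsum_mul_left] at hEq
  simp only [one_pow, one_mul, tsum_alternating] at hEq
  norm_num at hEq
  simp only [one_div]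
  linear_combination hEq
end
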